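/- Let Ω ⊂ ℂⁿ (n ≥ 2) be a bounded domain and U ⊆ ℂⁿ an open set such that Ω ∩ U is log-type convex. Then for any ξ ∈ ∂Ω ∩ U there exist ε > 0 with B_ε(ξ) ⊆ U and K′ > 0 such that K_Ω(p,q) ≤ K_{Ω∩U}(p,q) ≤ K_Ω(p,q) + K′ for all p, q ∈ Ω ∩ B_ε(ξ). -/

import Mathlib

open Metric Set MeasureTheory Filter Topology

noncomputable section

variable {E : Type*} [NormedAddCommGroup E] [NormedSpace ℂ E]

/-- Distance from `x` to the boundary of `D`. -/
def bdist (D : Set E) (x : E) : ℝ := Metric.infDist x (frontier D)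

/-- Distance from `x` to the boundary of `D` along the complex line `x + ℂ v`. -/
def bdistDir (D : Set E) (x v : E) : ℝ :=
  Metric.infDist x (frontier D ∩ {w | ∃ c : ℂ, w = x + c • v})

/-- The infinitesimal Kobayashi (pseudo-)metric of `D ⊆ E`. -/
def kobMetric (D : Set E) (x v : E) : ℝ :=
  sInf { r : ℝ | ∃ (f : ℂ → E) (ξ : ℂ),
    DifferentiableOn ℂ f (ball (0:ℂ) 1) ∧ MapsTo f (ball (0:ℂ) 1) D ∧
    f 0 = x ∧ ξ • derivWithin f (ball (0:ℂ) 1) 0 = v ∧ r = ‖ξ‖ }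

/-- `σ` is absolutely continuous on `[a,b]`, with a.e. derivative `g`. -/
def IsACWithDeriv (σ g : ℝ → E) (a b : ℝ) : Prop :=
  IntervalIntegrable g volume a b ∧
  ∀ t ∈ Icc a b, σ t = σ a + ∫ s in a..t, g s

/-- The Kobayashi pseudo-distance of `D`, defined via lengths of absolutely
continuous curves (Venturini's description). -/
def kobDist (D : Set E) (x y : E) : ℝ :=
  sInf { r : ℝ | ∃ (a b : ℝ) (σ g : ℝ → E), a ≤ b ∧
    IsACWithDeriv σ g a b ∧ MapsTo σ (Icc a b) D ∧ σ a = x ∧ σ b = y ∧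
    r = ∫ t in a..b, kobMetric D (σ t) (g t) }

/-- Log-type convex domain, with explicit constants `C, ν > 0`. -/
def LogTypeConvexWith (D : Set E) (C ν : ℝ) : Prop :=
  IsOpen D ∧ D.Nonempty ∧ Bornology.IsBounded D ∧ Convex ℝ D ∧ 0 < C ∧ 0 < ν ∧
  ∀ z ∈ D, ∀ v : E, v ≠ 0 →
    bdistDir D z v ≤ C / |Real.log (bdist D z)| ^ (1 + ν)

/-- Log-type convex domain. -/
def LogTypeConvex (D : Set E) : Prop := ∃ C ν : ℝ, LogTypeConvexWith D C ν

/-- A `ℂ`-convex set: every nonempty intersection with a complex affine line is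
connected and simply connected. -/
def CConvex (D : Set E) : Prop :=
  ∀ z v : E, v ≠ 0 → (D ∩ {w | ∃ c : ℂ, w = z + c • v}).Nonempty →
    IsConnected (D ∩ {w | ∃ c : ℂ, w = z + c • v}) ∧
    SimplyConnectedSpace ↥(D ∩ {w | ∃ c : ℂ, w = z + c • v})

/-- Log-type `ℂ`-convex domain. -/
def LogTypeCConvex (D : Set E) : Prop :=
  IsOpen D ∧ D.Nonempty ∧ Bornology.IsBounded D ∧ CConvex D ∧
  ∃ C ν : ℝ, 0 < C ∧ 0 < ν ∧
    ∀ z ∈ D, ∀ v : E, v ≠ 0 →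
      bdistDir D z v ≤ C / |Real.log (bdist D z)| ^ (1 + ν)

/-- `σ : [a,b] → D` (with a.e. derivative `g`) is a `(λ,κ)`-almost geodesic for the
Kobayashi distance of `D`. -/
def AlmostGeodesicOn (D : Set E) (lam kap : ℝ) (σ g : ℝ → E) (a b : ℝ) : Prop :=
  MapsTo σ (Icc a b) D ∧ IsACWithDeriv σ g a b ∧
  (∀ s ∈ Icc a b, ∀ t ∈ Icc a b,
    (1 / lam) * |t - s| - kap ≤ kobDist D (σ s) (σ t) ∧
    kobDist D (σ s) (σ t) ≤ lam * |t - s| + kap) ∧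
  (∀ᵐ t ∂volume, t ∈ Icc a b → kobMetric D (σ t) (g t) ≤ lam)

/-- `σ : [a,b] → D` is a `C`-rough geodesic for the Kobayashi distance of `D`. -/
def RoughGeodesicOn (D : Set E) (C : ℝ) (σ : ℝ → E) (a b : ℝ) : Prop :=
  MapsTo σ (Icc a b) D ∧
  ∀ s ∈ Icc a b, ∀ t ∈ Icc a b,
    |t - s| - C ≤ kobDist D (σ s) (σ t) ∧ kobDist D (σ s) (σ t) ≤ |t - s| + C

/-- `ρ` is a `C¹` local defining function for `D` near `ξ` on the open set `W`. -/
def IsLocalDefiningFn (D : Set E) (ξ : E) (W : Set E) (ρ : E → ℝ) : Prop :=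
  IsOpen W ∧ ξ ∈ W ∧ ContDiffOn ℝ 1 ρ W ∧ (∀ x ∈ W, fderiv ℝ ρ x ≠ 0) ∧
  D ∩ W = {x ∈ W | ρ x < 0} ∧ frontier D ∩ W = {x ∈ W | ρ x = 0}

/-- `ξ` is a Dini-smooth boundary point of `D`: the boundary is `C¹` near `ξ` and the
unit normal admits a modulus of continuity `ω` satisfying the Dini condition. -/
def DiniSmoothBoundaryPoint (D : Set E) (ξ : E) : Prop :=
  ∃ (W : Set E) (ρ : E → ℝ) (ω : ℝ → ℝ),
    IsLocalDefiningFn D ξ W ρ ∧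
    (∀ t ∈ Icc (0:ℝ) 1, 0 ≤ ω t) ∧ MonotoneOn ω (Icc (0:ℝ) 1) ∧
    IntegrableOn (fun t => ω t / t) (Ioc (0:ℝ) 1) ∧
    ∀ x ∈ frontier D ∩ W, ∀ y ∈ frontier D ∩ W, ‖x - y‖ ≤ 1 →
      ‖(‖fderiv ℝ ρ x‖)⁻¹ • fderiv ℝ ρ x - (‖fderiv ℝ ρ y‖)⁻¹ • fderiv ℝ ρ y‖ ≤ ω ‖x - y‖

/-- `D` has `C^{1,ε}` boundary: near every boundary point there is a `C¹` defining
function whose differential is `ε`-Hölder. -/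
def HolderC1Boundary (D : Set E) (ε : ℝ) : Prop :=
  ∀ ξ ∈ frontier D, ∃ (W : Set E) (ρ : E → ℝ) (M : ℝ), 0 < M ∧
    IsLocalDefiningFn D ξ W ρ ∧
    ∀ x ∈ W, ∀ y ∈ W, ‖fderiv ℝ ρ x - fderiv ℝ ρ y‖ ≤ M * ‖x - y‖ ^ ε

/-- The complex affine tangent hyperplane of `∂D` at `x`, computed from a local
defining function `ρ`. -/
def complexTangentHyperplane (ρ : E → ℝ) (x : E) : Set E :=
  {w : E | fderiv ℝ ρ x (w - x) = 0 ∧ fderiv ℝ ρ x ((Complex.I : ℂ) • (w - x)) = 0}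

/-- The Gromov product of `x` and `y` with respect to the base point `o`, for the
Kobayashi distance of `D`. -/
def gromovProd (D : Set E) (o x y : E) : ℝ :=
  (kobDist D x o + kobDist D o y - kobDist D x y) / 2

end


/-! ### Change of variables along arc length -/

lemma ac_lipschitz_comp {S Φ : ℝ → ℝ} {a b : ℝ} {s : Set ℝ} {K : NNReal}
    (hS : AbsolutelyContinuousOnInterval S a b)
    (hΦ : LipschitzOnWith K Φ s) (hm : ∀ t ∈ uIcc a b, S t ∈ s) :
    AbsolutelyContinuousOnInterval (fun t => Φ (S t)) a b := by
  rw [absolutelyContinuousOnInterval_iff] at hS ⊢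
  intro ε hε
  obtain ⟨δ, hδ, h⟩ := hS (ε / (K + 1)) (by positivity)
  refine ⟨δ, hδ, fun I hI hlt => ?_⟩
  have h1 := h I hI hlt
  have h2 : ∑ i ∈ Finset.range I.1, dist (Φ (S (I.2 i).1)) (Φ (S (I.2 i).2))
      ≤ K * ∑ i ∈ Finset.range I.1, dist (S (I.2 i).1) (S (I.2 i).2) := by
    rw [Finset.mul_sum]
    refine Finset.sum_le_sum fun i hi => ?_
    have hi' := hI.1 i hi
    exact hΦ.dist_le_mul _ (hm _ hi'.1) _ (hm _ hi'.2)
  have h3 : 0 ≤ ∑ i ∈ Finset.range I.1, dist (S (I.2 i).1) (S (I.2 i).2) :=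
    Finset.sum_nonneg fun _ _ => dist_nonneg
  rw [lt_div_iff₀ (by positivity)] at h1
  nlinarith [K.2]

lemma integral_comp_arclength {κ Φ φ : ℝ → ℝ} {c d B : ℝ} (hcd : c ≤ d)
    (hκ : IntervalIntegrable κ volume c d) (hκ0 : ∀ t ∈ Icc c d, 0 ≤ κ t)
    (hΦ : ∀ x ∈ Icc 0 (∫ s in c..d, κ s), HasDerivAt Φ (φ x) x)
    (hB : ∀ x ∈ Icc 0 (∫ s in c..d, κ s), |φ x| ≤ B) :
    IntervalIntegrable (fun t => φ (∫ s in c..t, κ s) * κ t) volume c d ∧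
    ∫ t in c..d, φ (∫ s in c..t, κ s) * κ t = Φ (∫ s in c..d, κ s) - Φ 0 := by
  set S : ℝ → ℝ := fun t => ∫ s in c..t, κ s with hSdef
  have hS : AbsolutelyContinuousOnInterval S c d :=
    hκ.absolutelyContinuousOnInterval_intervalIntegral (by simp)
  have hm : ∀ t ∈ uIcc c d, S t ∈ Icc 0 (S d) := by
    intro t ht
    rw [uIcc_of_le hcd] at ht
    constructor
    · exact intervalIntegral.integral_nonneg ht.1 fun u hu => hκ0 u ⟨hu.1, hu.2.trans ht.2⟩
    · have h1 : IntervalIntegrable κ volume c t := hκ.mono_set (by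
        rw [uIcc_of_le hcd, uIcc_of_le ht.1]; exact Icc_subset_Icc_right ht.2)
      have h2 : IntervalIntegrable κ volume t d := hκ.mono_set (by
        rw [uIcc_of_le hcd, uIcc_of_le ht.2]; exact Icc_subset_Icc_left ht.1)
      have h3 := intervalIntegral.integral_add_adjacent_intervals h1 h2
      have h4 : 0 ≤ ∫ s in t..d, κ s :=
        intervalIntegral.integral_nonneg ht.2 fun u hu => hκ0 u ⟨ht.1.trans hu.1, hu.2⟩
      show S t ≤ S d
      simp only [hSdef]; linarith
  have hB0 : 0 ≤ B := (abs_nonneg _).trans (hB 0 ⟨le_rfl, (hm d (by simp)).1⟩)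
  have hlip : LipschitzOnWith B.toNNReal Φ (Icc 0 (S d)) := by
    refine Convex.lipschitzOnWith_of_nnnorm_hasDerivWithin_le (f' := φ) (convex_Icc _ _)
      (fun x hx => (hΦ x hx).hasDerivWithinAt) fun x hx => ?_
    rw [← NNReal.coe_le_coe]
    simpa [hB0] using hB x hx
  have hAC := ac_lipschitz_comp hS hlip hm
  have hae : ∀ᵐ t, t ∈ uIcc c d → deriv (fun t => Φ (S t)) t = φ (S t) * κ t := by
    filter_upwards [hκ.ae_hasDerivAt_integral] with t ht htm
    exact ((hΦ (S t) (hm t htm)).comp t (ht htm c (by simp))).deriv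
  have hae' : ∀ᵐ t, t ∈ uIoc c d → deriv (fun t => Φ (S t)) t = φ (S t) * κ t := by
    filter_upwards [hae] with t ht h using ht (uIoc_subset_uIcc h)
  constructor
  · refine hAC.intervalIntegrable_deriv.congr_ae ?_
    exact (ae_restrict_iff' measurableSet_uIoc).2 hae'
  · have := hAC.integral_deriv_eq_sub
    rw [intervalIntegral.integral_congr_ae hae'] at this
    rw [this]
    simp [hSdef]

lemma two_sided {κ Φ φ F : ℝ → ℝ} {t1 t2 t0 A B : ℝ} (h10 : t1 ≤ t0) (h02 : t0 ≤ t2)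
    (hκ : IntervalIntegrable κ volume t1 t2) (hκ0 : ∀ t ∈ Icc t1 t2, 0 ≤ κ t)
    (hΦ : ∀ x, 0 ≤ x → HasDerivAt Φ (φ x) x)
    (hB : ∀ x, 0 ≤ x → |φ x| ≤ B)
    (hA : ∀ x, 0 ≤ x → Φ x - Φ 0 ≤ A)
    (hF : IntervalIntegrable F volume t1 t2)
    (hFle : ∀ t ∈ Icc t1 t2, F t ≤ φ |∫ s in t0..t, κ s| * κ t) :
    ∫ t in t1..t2, F t ≤ 2 * A := by
  have s1 : uIcc t1 t0 ⊆ uIcc t1 t2 := by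
    rw [uIcc_of_le h10, uIcc_of_le (h10.trans h02)]; exact Icc_subset_Icc_right h02
  have s2 : uIcc t0 t2 ⊆ uIcc t1 t2 := by
    rw [uIcc_of_le h02, uIcc_of_le (h10.trans h02)]; exact Icc_subset_Icc_left h10
  have hκ1 := hκ.mono_set s1
  have hκ2 := hκ.mono_set s2
  rw [← intervalIntegral.integral_add_adjacent_intervals (hF.mono_set s1) (hF.mono_set s2)]
  have hT : 0 ≤ ∫ s in t1..t0, κ s :=
    intervalIntegral.integral_nonneg h10 fun u hu => hκ0 u ⟨hu.1, hu.2.trans h02⟩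
  have hT2 : 0 ≤ ∫ s in t0..t2, κ s :=
    intervalIntegral.integral_nonneg h02 fun u hu => hκ0 u ⟨h10.trans hu.1, hu.2⟩
  set T := ∫ s in t1..t0, κ s with hTdef
  -- left part
  have L := integral_comp_arclength (Φ := fun x => - Φ (T - x)) (φ := fun x => φ (T - x)) (B := B)
    h10 hκ1 (fun t ht => hκ0 t ⟨ht.1, ht.2.trans h02⟩)
    (fun x hx => by
      have h := (hΦ (T - x) (by linarith [hx.2])).comp x ((hasDerivAt_id x).const_sub T)
      have h' := h.fun_neg
      simpa [Function.comp_def] using h')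
    (fun x hx => hB _ (by linarith [hx.2]))
  have R := integral_comp_arclength (Φ := Φ) (φ := φ) (B := B)
    h02 hκ2 (fun t ht => hκ0 t ⟨h10.trans ht.1, ht.2⟩)
    (fun x hx => hΦ x hx.1) (fun x hx => hB x hx.1)
  have hL : ∫ t in t1..t0, F t ≤ A := by
    calc _ ≤ ∫ t in t1..t0, φ (T - ∫ s in t1..t, κ s) * κ t := by
          refine intervalIntegral.integral_mono_on h10 (hF.mono_set s1) L.1 fun t ht => ?_
          have := hFle t ⟨ht.1, ht.2.trans h02⟩
          have k1 : IntervalIntegrable κ volume t1 t := hκ1.mono_set (by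
            rw [uIcc_of_le h10, uIcc_of_le ht.1]; exact Icc_subset_Icc_right ht.2)
          have k2 : IntervalIntegrable κ volume t t0 := hκ1.mono_set (by
            rw [uIcc_of_le h10, uIcc_of_le ht.2]; exact Icc_subset_Icc_left ht.1)
          have h3 := intervalIntegral.integral_add_adjacent_intervals k1 k2
          have h4 : 0 ≤ ∫ s in t..t0, κ s :=
            intervalIntegral.integral_nonneg ht.2
              fun u hu => hκ0 u ⟨ht.1.trans hu.1, hu.2.trans h02⟩
          have h5 : |∫ s in t0..t, κ s| = T - ∫ s in t1..t, κ s := by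
            rw [intervalIntegral.integral_symm, abs_neg, abs_of_nonneg h4, hTdef]; linarith
          rwa [h5] at this
      _ ≤ A := by
        rw [L.2]
        have := hA T hT
        simp only [sub_zero, ← hTdef, sub_self]; linarith
  have hR : ∫ t in t0..t2, F t ≤ A := by
    calc _ ≤ ∫ t in t0..t2, φ (∫ s in t0..t, κ s) * κ t := by
          refine intervalIntegral.integral_mono_on h02 (hF.mono_set s2) R.1 fun t ht => ?_
          have := hFle t ⟨h10.trans ht.1, ht.2⟩
          have h4 : 0 ≤ ∫ s in t0..t, κ s :=
            intervalIntegral.integral_nonneg ht.1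
              fun u hu => hκ0 u ⟨h10.trans hu.1, hu.2.trans ht.2⟩
          rwa [abs_of_nonneg h4] at this
      _ ≤ A := by
        rw [R.2]; exact hA _ hT2
  linarith

/-! ### Basic properties of the Kobayashi metric -/

section Kob

variable {E : Type*} [NormedAddCommGroup E] [NormedSpace ℂ E]

/-- `f` is an analytic disc in `D` centered at `x`. -/
def IsDisc (D : Set E) (x : E) (f : ℂ → E) : Prop :=
  DifferentiableOn ℂ f (ball (0:ℂ) 1) ∧ MapsTo f (ball (0:ℂ) 1) D ∧ f 0 = x

lemma derivWithin_ball_zero (f : ℂ → E) : derivWithin f (ball (0:ℂ) 1) 0 = deriv f 0 :=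
  derivWithin_of_isOpen isOpen_ball (by simp)

lemma kobMetric_bddBelow (D : Set E) (x v : E) : BddBelow { r : ℝ | ∃ (f : ℂ → E) (ξ : ℂ),
    DifferentiableOn ℂ f (ball (0:ℂ) 1) ∧ MapsTo f (ball (0:ℂ) 1) D ∧
    f 0 = x ∧ ξ • derivWithin f (ball (0:ℂ) 1) 0 = v ∧ r = ‖ξ‖ } := by
  refine ⟨0, ?_⟩
  rintro r ⟨f, ξ, -, -, -, -, rfl⟩
  exact norm_nonneg _

lemma kobMetric_nonneg (D : Set E) (x v : E) : 0 ≤ kobMetric D x v := by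
  apply Real.sInf_nonneg
  rintro r ⟨f, ξ, -, -, -, -, rfl⟩
  exact norm_nonneg _

lemma kobMetric_le_of_disc {D : Set E} {x v : E} {f : ℂ → E} {ξ : ℂ} (hf : IsDisc D x f)
    (hv : ξ • deriv f 0 = v) : kobMetric D x v ≤ ‖ξ‖ := by
  apply csInf_le (kobMetric_bddBelow D x v)
  exact ⟨f, ξ, hf.1, hf.2.1, hf.2.2, by rw [derivWithin_ball_zero, hv], rfl⟩

lemma affine_disc {D : Set E} {x v : E} {r : ℝ} (hr : 0 < r) (hb : ball x r ⊆ D) (hv : ‖v‖ ≤ r) :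
    IsDisc D x (fun w => x + w • v) ∧ deriv (fun w : ℂ => x + w • v) 0 = v := by
  refine ⟨⟨by fun_prop, ?_, by simp⟩, ?_⟩
  · intro w hw
    apply hb
    simp only [mem_ball, dist_self_add_left, norm_smul]
    simp only [mem_ball, dist_zero_right] at hw
    nlinarith [norm_nonneg v, norm_nonneg w]
  · have : HasDerivAt (fun w : ℂ => x + w • v) ((1:ℂ) • v) 0 :=
      ((hasDerivAt_id (0:ℂ)).smul_const v).const_add x
    simpa using this.deriv

/-- The set of candidates is nonempty for points with a ball in `D`. -/
lemma exists_disc_of_ball {D : Set E} {x : E} (v : E) {r : ℝ} (hr : 0 < r) (hb : ball x r ⊆ D) :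
    ∃ (f : ℂ → E) (ξ : ℂ), IsDisc D x f ∧ ξ • deriv f 0 = v ∧ ‖ξ‖ = ‖v‖ / r := by
  by_cases hv : v = 0
  · exact ⟨_, 0, (affine_disc (v := (0:E)) hr hb (by simpa using hr.le)).1, by simp [hv], by simp [hv]⟩
  · have hv' : ‖v‖ ≠ 0 := norm_ne_zero_iff.2 hv
    have h := affine_disc (v := ((r / ‖v‖ : ℝ) : ℂ) • v) hr hb (by
      rw [norm_smul, Complex.norm_real, Real.norm_eq_abs, abs_of_nonneg (by positivity)]
      field_simp; rfl)
    refine ⟨_, ((‖v‖ / r : ℝ) : ℂ), h.1, ?_, ?_⟩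
    · rw [h.2, smul_smul, ← Complex.ofReal_mul]
      have : ‖v‖ / r * (r / ‖v‖) = 1 := by field_simp
      rw [this]; simp
    · rw [Complex.norm_real, Real.norm_eq_abs, abs_of_nonneg (by positivity)]

lemma kobMetric_le_of_ball {D : Set E} {x : E} (v : E) {r : ℝ} (hr : 0 < r) (hb : ball x r ⊆ D) :
    kobMetric D x v ≤ ‖v‖ / r := by
  obtain ⟨f, ξ, hf, hv, h⟩ := exists_disc_of_ball v hr hb
  rw [← h]; exact kobMetric_le_of_disc hf hv

lemma le_kobMetric {D : Set E} (hD : IsOpen D) {x v : E} (hx : x ∈ D) {c : ℝ}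
    (h : ∀ (f : ℂ → E) (ξ : ℂ), IsDisc D x f → ξ • deriv f 0 = v → c ≤ ‖ξ‖) :
    c ≤ kobMetric D x v := by
  apply le_csInf
  · obtain ⟨r, hr, hb⟩ := Metric.isOpen_iff.1 hD x hx
    obtain ⟨f, ξ, hf, hv, -⟩ := exists_disc_of_ball v hr hb
    exact ⟨_, f, ξ, hf.1, hf.2.1, hf.2.2, by rw [derivWithin_ball_zero, hv], rfl⟩
  · rintro r ⟨f, ξ, h1, h2, h3, h4, rfl⟩
    exact h f ξ ⟨h1, h2, h3⟩ (by rw [← h4, derivWithin_ball_zero])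

lemma kobMetric_of_notMem {D : Set E} {x v : E} (hx : x ∉ D) : kobMetric D x v = 0 := by
  unfold kobMetric
  convert Real.sInf_empty
  rw [eq_empty_iff_forall_notMem]
  rintro r ⟨f, ξ, -, h, rfl, -⟩
  exact hx (h (by simp))

lemma kobMetric_anti {D D' : Set E} (hD : IsOpen D) (hDD : D ⊆ D') {x : E} (v : E) (hx : x ∈ D) :
    kobMetric D' x v ≤ kobMetric D x v :=
  le_kobMetric hD hx fun _ _ hf hv => kobMetric_le_of_disc ⟨hf.1, hf.2.1.mono_right hDD, hf.2.2⟩ hv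

lemma kobMetric_neg (D : Set E) (x v : E) : kobMetric D x (-v) = kobMetric D x v := by
  unfold kobMetric
  congr 1
  ext r
  constructor
  · rintro ⟨f, ξ, h1, h2, h3, h4, rfl⟩
    exact ⟨f, -ξ, h1, h2, h3, by rw [neg_smul, h4, neg_neg], by simp⟩
  · rintro ⟨f, ξ, h1, h2, h3, h4, rfl⟩
    exact ⟨f, -ξ, h1, h2, h3, by rw [neg_smul, h4], by simp⟩

/-- Rescaling a disc. -/
lemma deriv_comp_scale (f : ℂ → E) {a c : ℂ} (hf : DifferentiableAt ℂ f a) :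
    deriv (fun w => f (a + c * w)) 0 = c • deriv f a := by
  have h1 : HasDerivAt (fun w : ℂ => a + c * w) c 0 := by
    simpa using ((hasDerivAt_id (0:ℂ)).const_mul c).const_add a
  have h2 : HasDerivAt f (deriv f a) (a + c * 0) := by simpa using hf.hasDerivAt
  exact (h2.scomp (0:ℂ) h1).deriv

/-- If a disc in `D'` maps the disc of radius `ρ` into `D`, we get a bound. -/
lemma kobMetric_le_of_shrink {D D' : Set E} {x v : E} {f : ℂ → E} {ξ : ℂ} {ρ : ℝ} (hρ : 0 < ρ)
    (hρ1 : ρ ≤ 1) (hf : IsDisc D' x f) (hv : ξ • deriv f 0 = v)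
    (hm : ∀ w : ℂ, ‖w‖ < ρ → f w ∈ D) : kobMetric D x v ≤ ‖ξ‖ / ρ := by
  have hρc : (ρ : ℂ) ≠ 0 := by exact_mod_cast hρ.ne'
  have hd0 : DifferentiableAt ℂ f 0 := hf.1.differentiableAt (ball_mem_nhds _ one_pos)
  have h : IsDisc D x (fun w => f (0 + (ρ:ℂ) * w)) := by
    refine ⟨?_, ?_, by simp [hf.2.2]⟩
    · refine hf.1.comp (by fun_prop) ?_
      intro w hw
      simp only [mem_ball, dist_zero_right, zero_add, norm_mul, Complex.norm_real,
        Real.norm_eq_abs, abs_of_pos hρ] at hw ⊢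
      nlinarith [norm_nonneg w]
    · intro w hw
      apply hm
      simp only [mem_ball, dist_zero_right, zero_add, norm_mul, Complex.norm_real,
        Real.norm_eq_abs, abs_of_pos hρ] at hw ⊢
      nlinarith [norm_nonneg w]
  have h2 := kobMetric_le_of_disc (ξ := ξ / ρ) (v := v) h (by
    rw [deriv_comp_scale f hd0, smul_smul, div_mul_cancel₀ _ hρc, hv])
  simpa [abs_of_pos hρ] using h2

/-- Upper semicontinuity. -/
lemma kobMetric_usc {D : Set E} (hD : IsOpen D) {x v : E} (hx : x ∈ D) {c : ℝ}
    (hc : kobMetric D x v < c) : ∀ᶠ p : E × E in 𝓝 (x, v), kobMetric D p.1 p.2 < c := by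
  have hc0 : 0 < c := (kobMetric_nonneg D x v).trans_lt hc
  -- a nonzero candidate
  obtain ⟨f, ξ, hf, hv, hξ0, hξc⟩ : ∃ (f : ℂ → E) (ξ : ℂ), IsDisc D x f ∧ ξ • deriv f 0 = v ∧
      ξ ≠ 0 ∧ ‖ξ‖ < c := by
    by_contra! hcon
    have hv0 : v = 0 ∨ v ≠ 0 := em _
    rcases hv0 with rfl | hv0
    · have := hcon (fun _ => x) ((c/2 : ℝ) : ℂ)
        ⟨by fun_prop, fun _ _ => hx, rfl⟩ (by simp)
        (by exact_mod_cast (half_pos hc0).ne')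
      rw [Complex.norm_real, Real.norm_eq_abs, abs_of_pos (half_pos hc0)] at this
      linarith
    · refine absurd (le_kobMetric hD hx (c := c) fun f ξ hf hv => ?_) (not_le.2 hc)
      refine hcon f ξ hf hv ?_
      rintro rfl
      simp at hv; exact hv0 hv.symm
  have hξn : 0 < ‖ξ‖ := norm_pos_iff.2 hξ0
  obtain ⟨r, hr1, hr2⟩ : ∃ r : ℝ, ‖ξ‖ / c < r ∧ r < 1 := exists_between (by
    rw [div_lt_one hc0]; exact hξc)
  have hr0 : 0 < r := lt_trans (by positivity) hr1
  -- compactness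
  have hsub : closedBall (0:ℂ) r ⊆ ball 0 1 := closedBall_subset_ball hr2
  have hcpt : IsCompact (f '' closedBall (0:ℂ) r) :=
    (isCompact_closedBall _ _).image_of_continuousOn (hf.1.continuousOn.mono hsub)
  obtain ⟨η, hη, hηD⟩ := hcpt.exists_thickening_subset_open hD (by
    rintro _ ⟨w, hw, rfl⟩; exact hf.2.1 (hsub hw))
  have hd0 : DifferentiableAt ℂ f 0 := hf.1.differentiableAt (ball_mem_nhds _ one_pos)
  have hnear : ∀ᶠ p : E × E in 𝓝 (x, v), ‖p.1 - x‖ + ‖(r / ξ : ℂ) • (p.2 - v)‖ < η := by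
    have : Continuous fun p : E × E => ‖p.1 - x‖ + ‖(r / ξ : ℂ) • (p.2 - v)‖ := by fun_prop
    exact this.tendsto' (x, v) 0 (by simp) |>.eventually (gt_mem_nhds hη)
  filter_upwards [hnear] with p hp
  have hdisc : IsDisc D p.1 (fun w => f (0 + (r:ℂ) * w) + ((p.1 - x) + w • ((r / ξ : ℂ) • (p.2 - v)))) := by
    have hmul : ∀ w ∈ ball (0:ℂ) 1, (0 + (r:ℂ) * w) ∈ closedBall (0:ℂ) r := by
      intro w hw
      simp only [mem_ball, mem_closedBall, dist_zero_right, zero_add, norm_mul, Complex.norm_real,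
        Real.norm_eq_abs, abs_of_pos hr0] at hw ⊢
      nlinarith [norm_nonneg w]
    refine ⟨?_, ?_, by simp [hf.2.2]⟩
    · refine DifferentiableOn.add (hf.1.comp (by fun_prop) fun w hw => hsub (hmul w hw)) (by fun_prop)
    · intro w hw
      apply hηD
      rw [mem_thickening_iff]
      refine ⟨_, ⟨_, hmul w hw, rfl⟩, ?_⟩
      rw [dist_self_add_left]
      refine lt_of_le_of_lt ((norm_add_le _ _).trans ?_) hp
      gcongr
      rw [norm_smul]
      simp only [mem_ball, dist_zero_right] at hw
      exact mul_le_of_le_one_left (norm_nonneg _) hw.le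
  have hder : deriv (fun w : ℂ => f (0 + (r:ℂ) * w) + ((p.1 - x) + w • ((r / ξ : ℂ) • (p.2 - v)))) 0
      = (r / ξ : ℂ) • p.2 := by
    have h1 : HasDerivAt (fun w : ℂ => 0 + (r:ℂ) * w) (r:ℂ) 0 := by
      simpa using ((hasDerivAt_id (0:ℂ)).const_mul (r:ℂ)).const_add 0
    have h2 : HasDerivAt f (deriv f 0) (0 + (r:ℂ) * 0) := by simpa using hd0.hasDerivAt
    have h3 := h2.scomp (0:ℂ) h1
    have h4 : HasDerivAt (fun w : ℂ => (p.1 - x) + w • ((r / ξ : ℂ) • (p.2 - v)))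
        ((1:ℂ) • ((r / ξ : ℂ) • (p.2 - v))) 0 :=
      ((hasDerivAt_id (0:ℂ)).smul_const _).const_add _
    have h5 := (h3.add h4).deriv
    have h6 : (r:ℂ) • deriv f 0 = (r / ξ : ℂ) • v := by
      rw [← hv, smul_smul, div_mul_cancel₀ _ hξ0]
    have h7 : (r:ℂ) • deriv f 0 + (1:ℂ) • ((r / ξ : ℂ) • (p.2 - v)) = (r / ξ : ℂ) • p.2 := by
      rw [h6, one_smul, ← smul_add]; congr 1; abel
    rw [← h7, ← h5]; rfl
  have hrc : (r:ℂ) ≠ 0 := by exact_mod_cast hr0.ne'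
  have hle := kobMetric_le_of_disc (ξ := ξ / r) (v := p.2) hdisc (by
    rw [hder, smul_smul]
    have : (ξ / r : ℂ) * (r / ξ) = 1 := by field_simp
    rw [this, one_smul])
  refine hle.trans_lt ?_
  rw [norm_div, Complex.norm_real, Real.norm_eq_abs, abs_of_pos hr0]
  rw [div_lt_iff₀ hc0] at hr1
  rw [div_lt_iff₀ hr0]; linarith

lemma kobMetric_measurable [MeasurableSpace E] [BorelSpace E] [SecondCountableTopology E]
    {D : Set E} (hD : IsOpen D) :
    Measurable fun p : E × E => kobMetric D p.1 p.2 := by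
  refine measurable_of_Iio fun c => ?_
  by_cases hc : 0 < c
  · have h : (fun p : E × E => kobMetric D p.1 p.2) ⁻¹' Iio c =
        {p : E × E | p.1 ∈ D ∧ kobMetric D p.1 p.2 < c} ∪ Prod.fst ⁻¹' Dᶜ := by
      ext p
      by_cases hp : p.1 ∈ D
      · simp [hp]
      · simp [hp, kobMetric_of_notMem hp, hc]
    rw [h]
    refine MeasurableSet.union (IsOpen.measurableSet ?_) (measurable_fst hD.measurableSet.compl)
    rw [isOpen_iff_mem_nhds]
    rintro ⟨x, v⟩ ⟨hx, hv⟩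
    filter_upwards [kobMetric_usc hD hx hv, continuous_fst.continuousAt.preimage_mem_nhds (hD.mem_nhds hx)]
      with p h1 h2 using ⟨h2, h1⟩
  · have h : (fun p : E × E => kobMetric D p.1 p.2) ⁻¹' Iio c = ∅ := by
      ext p
      simpa using (not_lt.1 hc).trans (kobMetric_nonneg D p.1 p.2)
    rw [h]; exact MeasurableSet.empty

end Kob

/-! ### Paths and lengths -/

section Paths

variable {E : Type*} [NormedAddCommGroup E] [NormedSpace ℂ E]

/-- An absolutely continuous path in `D`. -/
def IsPath (D : Set E) (a b : ℝ) (σ g : ℝ → E) : Prop :=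
  a ≤ b ∧ IsACWithDeriv σ g a b ∧ MapsTo σ (Icc a b) D

/-- Kobayashi length. -/
noncomputable def klen (D : Set E) (a b : ℝ) (σ g : ℝ → E) : ℝ :=
  ∫ t in a..b, kobMetric D (σ t) (g t)

/-- There is a path of length `r` from `x` to `y`. -/
def PathLen (D : Set E) (x y : E) (r : ℝ) : Prop :=
  ∃ (a b : ℝ) (σ g : ℝ → E), IsPath D a b σ g ∧ σ a = x ∧ σ b = y ∧ r = klen D a b σ g

lemma kobDist_eq (D : Set E) (x y : E) : kobDist D x y = sInf {r | PathLen D x y r} := by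
  unfold kobDist PathLen IsPath klen
  congr 1
  ext r
  constructor
  · rintro ⟨a, b, σ, g, h1, h2, h3, h4, h5, h6⟩
    exact ⟨a, b, σ, g, ⟨h1, h2, h3⟩, h4, h5, h6⟩
  · rintro ⟨a, b, σ, g, ⟨h1, h2, h3⟩, h4, h5, h6⟩
    exact ⟨a, b, σ, g, h1, h2, h3, h4, h5, h6⟩

lemma klen_nonneg (D : Set E) {a b : ℝ} (hab : a ≤ b) (σ g : ℝ → E) : 0 ≤ klen D a b σ g :=
  intervalIntegral.integral_nonneg hab fun _ _ => kobMetric_nonneg _ _ _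

lemma PathLen.nonneg {D : Set E} {x y : E} {r : ℝ} (h : PathLen D x y r) : 0 ≤ r := by
  obtain ⟨a, b, σ, g, h1, -, -, rfl⟩ := h
  exact klen_nonneg D h1.1 σ g

lemma PathLen.kobDist_le {D : Set E} {x y : E} {r : ℝ} (h : PathLen D x y r) :
    kobDist D x y ≤ r := by
  rw [kobDist_eq]
  exact csInf_le ⟨0, fun r hr => PathLen.nonneg hr⟩ h

lemma IsPath.continuousOn {D : Set E} {a b : ℝ} {σ g : ℝ → E} (h : IsPath D a b σ g) :
    ContinuousOn σ (Icc a b) := by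
  have h1 : ContinuousOn (fun t => ∫ s in a..t, g s) (Icc a b) := by
    have := intervalIntegral.continuousOn_primitive_interval' h.2.1.1 (a := a) (by simp)
    rwa [uIcc_of_le h.1] at this
  exact (continuousOn_const.add h1).congr h.2.1.2

lemma IsPath.sub {D : Set E} {a b : ℝ} {σ g : ℝ → E} (h : IsPath D a b σ g) {c d : ℝ}
    (hac : a ≤ c) (hcd : c ≤ d) (hdb : d ≤ b) : IsPath D c d σ g := by
  have hInt : ∀ {u v}, a ≤ u → u ≤ v → v ≤ b → IntervalIntegrable g volume u v := by
    intro u v h1 h2 h3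
    refine h.2.1.1.mono_set ?_
    rw [uIcc_of_le h2, uIcc_of_le h.1]; exact Icc_subset_Icc h1 h3
  refine ⟨hcd, ⟨hInt hac hcd hdb, fun t ht => ?_⟩, h.2.2.mono_left (Icc_subset_Icc hac hdb)⟩
  have htb := ht.2.trans hdb
  rw [h.2.1.2 t ⟨hac.trans ht.1, htb⟩, h.2.1.2 c ⟨hac, hcd.trans hdb⟩, add_assoc,
    intervalIntegral.integral_add_adjacent_intervals (hInt le_rfl hac (hcd.trans hdb))
      (hInt hac ht.1 htb)]

lemma IsPath.sub_eq {D : Set E} {a b : ℝ} {σ g : ℝ → E} (h : IsPath D a b σ g) :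
    σ b - σ a = ∫ s in a..b, g s := by
  rw [h.2.1.2 b ⟨h.1, le_rfl⟩]; abel

lemma IsPath.mono {D D' : Set E} {a b : ℝ} {σ g : ℝ → E} (h : IsPath D a b σ g)
    (hm : MapsTo σ (Icc a b) D') : IsPath D' a b σ g := ⟨h.1, h.2.1, hm⟩

lemma IsPath.shift {D : Set E} {a b : ℝ} {σ g : ℝ → E} (h : IsPath D a b σ g) (c : ℝ) :
    IsPath D (a + c) (b + c) (fun t => σ (t - c)) (fun t => g (t - c)) := by
  refine ⟨by linarith [h.1], ⟨h.2.1.1.comp_sub_right c, fun t ht => ?_⟩, fun t ht => ?_⟩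
  · simp only [intervalIntegral.integral_comp_sub_right, add_sub_cancel_right]
    exact h.2.1.2 _ ⟨by linarith [ht.1], by linarith [ht.2]⟩
  · exact h.2.2 ⟨by linarith [ht.1], by linarith [ht.2]⟩

lemma IsPath.rev {D : Set E} {a b : ℝ} {σ g : ℝ → E} (h : IsPath D a b σ g) :
    IsPath D (-b) (-a) (fun t => σ (-t)) (fun t => - g (-t)) := by
  refine ⟨by linarith [h.1], ⟨?_, fun t ht => ?_⟩, fun t ht => ?_⟩
  · exact ((IntervalIntegrable.iff_comp_neg).1 h.2.1.1).symm.neg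
  · have ht' : -t ∈ Icc a b := ⟨by linarith [ht.2], by linarith [ht.1]⟩
    have := (h.sub ht'.1 ht'.2 le_rfl).sub_eq
    simp only [intervalIntegral.integral_neg, intervalIntegral.integral_comp_neg, neg_neg]
    rw [← this]; abel
  · exact h.2.2 ⟨by linarith [ht.2], by linarith [ht.1]⟩

lemma PathLen.symm {D : Set E} {x y : E} {r : ℝ} (h : PathLen D x y r) : PathLen D y x r := by
  obtain ⟨a, b, σ, g, h1, rfl, rfl, rfl⟩ := h
  refine ⟨_, _, _, _, h1.rev, by simp, by simp, ?_⟩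
  simp only [klen, kobMetric_neg]
  rw [intervalIntegral.integral_comp_neg (fun t => kobMetric D (σ t) (g t))]
  simp

lemma PathLen.refl {D : Set E} {x : E} (hx : x ∈ D) : PathLen D x x 0 := by
  refine ⟨0, 0, fun _ => x, fun _ => 0, ⟨le_rfl, ⟨by simp, by simp⟩, fun _ _ => hx⟩, rfl, rfl, ?_⟩
  simp [klen]

variable [MeasurableSpace E] [BorelSpace E] [SecondCountableTopology E]

lemma IsPath.integrable {D : Set E} (hD : IsOpen D) {a b : ℝ} {σ g : ℝ → E}
    (h : IsPath D a b σ g) :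
    IntervalIntegrable (fun t => kobMetric D (σ t) (g t)) volume a b := by
  obtain ⟨η, hη, hηD⟩ := (isCompact_Icc.image_of_continuousOn h.continuousOn).exists_thickening_subset_open
    hD h.2.2.image_subset
  have hσ : AEMeasurable σ (volume.restrict (Ioc a b)) :=
    (h.continuousOn.mono Ioc_subset_Icc_self).aemeasurable measurableSet_Ioc
  have hg : IntegrableOn g (Ioc a b) := (intervalIntegrable_iff_integrableOn_Ioc_of_le h.1).1 h.2.1.1
  have hg' : AEMeasurable g (volume.restrict (Ioc a b)) := hg.aestronglyMeasurable.aemeasurable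
  rw [intervalIntegrable_iff_integrableOn_Ioc_of_le h.1]
  have hm : AEStronglyMeasurable (fun t => kobMetric D (σ t) (g t)) (volume.restrict (Ioc a b)) :=
    ((kobMetric_measurable hD).comp_aemeasurable (hσ.prodMk hg')).aestronglyMeasurable
  refine Integrable.mono' (hg.norm.div_const η) hm ?_
  refine (ae_restrict_iff' measurableSet_Ioc).2 (Eventually.of_forall fun t ht => ?_)
  rw [Real.norm_eq_abs, abs_of_nonneg (kobMetric_nonneg _ _ _)]
  refine kobMetric_le_of_ball _ hη (subset_trans ?_ hηD)
  exact ball_subset_thickening (mem_image_of_mem σ (Ioc_subset_Icc_self ht)) η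

lemma IsPath.klen_add {D : Set E} (hD : IsOpen D) {a b c : ℝ} {σ g : ℝ → E}
    (h : IsPath D a c σ g) (hab : a ≤ b) (hbc : b ≤ c) :
    klen D a b σ g + klen D b c σ g = klen D a c σ g :=
  intervalIntegral.integral_add_adjacent_intervals
    ((h.sub le_rfl hab hbc).integrable hD) ((h.sub hab hbc le_rfl).integrable hD)

lemma PathLen.trans {D : Set E} (hD : IsOpen D) {x y z : E} {r s : ℝ} (h : PathLen D x y r)
    (h' : PathLen D y z s) : PathLen D x z (r + s) := by
  obtain ⟨a, b, σ, g, h1, rfl, rfl, rfl⟩ := h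
  obtain ⟨c, d, τ, k, h2, hc, rfl, rfl⟩ := h'
  have h3 := h2.shift (b - c)
  have e1 : c + (b - c) = b := by ring
  rw [e1] at h3
  set d' := d + (b - c) with hd'
  have hl : klen D c d τ k = klen D b d' (fun t => τ (t - (b - c))) (fun t => k (t - (b - c))) := by
    simp only [klen]
    rw [intervalIntegral.integral_comp_sub_right (fun t => kobMetric D (τ t) (k t))]
    congr 1 <;> simp [hd']
  have hd : τ d = (fun t => τ (t - (b - c))) d' := by simp [hd']
  have hc' : (fun t => τ (t - (b - c))) b = σ b := by simp [hc]
  rw [hl, hd]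
  clear_value d'
  generalize (fun t => τ (t - (b - c))) = τ' at *
  generalize (fun t => k (t - (b - c))) = k' at *
  clear hl hd h2 hc
  have f1 : ∀ t ∈ uIoc a b, (if t ≤ b then g t else k' t) = g t := fun t ht => by
    rw [uIoc_of_le h1.1] at ht; simp [ht.2]
  have f2 : ∀ t, ∀ s ∈ uIoc b t, b ≤ t → (if s ≤ b then g s else k' s) = k' s := fun t s hs hb => by
    rw [uIoc_of_le hb] at hs; simp [hs.1]
  have i1 : IntervalIntegrable (fun t => if t ≤ b then g t else k' t) volume a b :=
    h1.2.1.1.congr fun t ht => (f1 t ht).symm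
  have i2 : IntervalIntegrable (fun t => if t ≤ b then g t else k' t) volume b d' :=
    h3.2.1.1.congr fun t ht => (f2 _ t ht h3.1).symm
  have hp : IsPath D a d' (fun t => if t ≤ b then σ t else τ' t)
      (fun t => if t ≤ b then g t else k' t) := by
    refine ⟨h1.1.trans h3.1, ⟨i1.trans i2, fun t ht => ?_⟩, fun t ht => ?_⟩
    · simp only [h1.1, if_true]
      by_cases htb : t ≤ b
      · simp only [htb, if_true]
        rw [h1.2.1.2 t ⟨ht.1, htb⟩]
        congr 1
        refine intervalIntegral.integral_congr_ae (Eventually.of_forall fun s hs => ?_)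
        refine (f1 s ?_).symm
        rw [uIoc_of_le ht.1] at hs; rw [uIoc_of_le h1.1]; exact ⟨hs.1, hs.2.trans htb⟩
      · simp only [htb, if_false]
        have htb' : b ≤ t := (not_le.1 htb).le
        rw [← intervalIntegral.integral_add_adjacent_intervals i1 (i2.mono_set (by
          rw [uIcc_of_le h3.1, uIcc_of_le htb']; exact Icc_subset_Icc_right ht.2))]
        rw [h3.2.1.2 t ⟨htb', ht.2⟩, hc', h1.2.1.2 b ⟨h1.1, le_rfl⟩, add_assoc]
        congr 2
        · exact intervalIntegral.integral_congr_ae (Eventually.of_forall fun s hs => (f1 s hs).symm)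
        · exact intervalIntegral.integral_congr_ae
            (Eventually.of_forall fun s hs => (f2 _ s hs htb').symm)
    · by_cases htb : t ≤ b
      · simpa only [htb, if_true] using h1.2.2 ⟨ht.1, htb⟩
      · simpa only [htb, if_false] using h3.2.2 ⟨(not_le.1 htb).le, ht.2⟩
  refine ⟨a, d', _, _, hp, by simp [h1.1], ?_, ?_⟩
  · by_cases hdb : d' ≤ b
    · have : d' = b := le_antisymm hdb h3.1
      subst this; simp [hc']
    · simp [hdb]
  · rw [← hp.klen_add hD h1.1 h3.1]
    congr 1
    · refine intervalIntegral.integral_congr_ae (Eventually.of_forall fun s hs => ?_)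
      rw [uIoc_of_le h1.1] at hs; simp [hs.2]
    · refine intervalIntegral.integral_congr_ae (Eventually.of_forall fun s hs => ?_)
      rw [uIoc_of_le h3.1] at hs; simp [not_le.2 hs.1]

/-- near-optimality of subpaths -/
lemma IsPath.near_opt {D : Set E} (hD : IsOpen D) {a b : ℝ} {σ g : ℝ → E}
    (h : IsPath D a b σ g) (hopt : klen D a b σ g ≤ kobDist D (σ a) (σ b) + 1)
    {s t : ℝ} (has : a ≤ s) (hst : s ≤ t) (htb : t ≤ b) {r : ℝ} (hr : PathLen D (σ s) (σ t) r) :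
    klen D s t σ g ≤ r + 1 := by
  have p1 : PathLen D (σ a) (σ s) (klen D a s σ g) :=
    ⟨_, _, _, _, h.sub le_rfl has (hst.trans htb), rfl, rfl, rfl⟩
  have p2 : PathLen D (σ t) (σ b) (klen D t b σ g) :=
    ⟨_, _, _, _, h.sub (has.trans hst) htb le_rfl, rfl, rfl, rfl⟩
  have := ((p1.trans hD hr).trans hD p2).kobDist_le
  have e1 := h.klen_add hD has (hst.trans htb)
  have e2 := (h.sub has (hst.trans htb) le_rfl).klen_add hD hst htb
  linarith

end Paths

/-! ### Boundary distance and discs in convex domains -/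

section Geom

variable {E : Type*} [NormedAddCommGroup E] [NormedSpace ℂ E]

lemma preconn_subset_of_disjoint_frontier {D s : Set E} (hD : IsOpen D) (hs : IsPreconnected s)
    (hne : (s ∩ D).Nonempty) (hd : ∀ x ∈ s, x ∉ frontier D) : s ⊆ D := by
  refine hs.subset_left_of_subset_union (v := (closure D)ᶜ) hD isClosed_closure.isOpen_compl ?_ ?_ hne
  · exact disjoint_compl_right.mono_left subset_closure |>.mono_right le_rfl
  · intro x hx
    by_cases h : x ∈ D
    · exact Or.inl h
    · refine Or.inr fun hc => hd x hx ?_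
      rw [hD.frontier_eq]; exact ⟨hc, h⟩

lemma ball_bdist_subset {D : Set E} (hD : IsOpen D) {x : E} (hx : x ∈ D) :
    ball x (bdist D x) ⊆ D := by
  by_cases h : 0 < bdist D x
  · refine preconn_subset_of_disjoint_frontier hD (convex_ball x _).isPreconnected
      ⟨x, mem_ball_self h, hx⟩ fun y hy hf => ?_
    have := infDist_le_dist_of_mem (x := x) hf
    rw [mem_ball, dist_comm] at hy
    exact absurd this (not_le.2 hy)
  · rw [ball_eq_empty.2 (not_lt.1 h)]; exact empty_subset _

lemma frontier_nonempty_line {D : Set E} (hD : IsOpen D) (hb : Bornology.IsBounded D) {x v : E}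
    (hx : x ∈ D) (hv : v ≠ 0) : (frontier D ∩ {w | ∃ c : ℂ, w = x + c • v}).Nonempty := by
  by_contra hne
  have hsub : {w | ∃ c : ℂ, w = x + c • v} ⊆ D := by
    refine preconn_subset_of_disjoint_frontier hD ?_ ⟨x, ⟨0, by simp⟩, hx⟩
      fun y hy hf => hne ⟨y, hf, hy⟩
    have : {w | ∃ c : ℂ, w = x + c • v} = range fun c : ℂ => x + c • v := by
      ext w; simp [eq_comm]
    rw [this]
    exact isPreconnected_range (by fun_prop)
  obtain ⟨R, hR⟩ := hb.subset_ball x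
  have hv' : ‖v‖ ≠ 0 := norm_ne_zero_iff.2 hv
  have hR0 : 0 < R := by simpa using hR hx
  have := hR (hsub ⟨((R / ‖v‖ : ℝ) : ℂ), rfl⟩)
  rw [mem_ball, dist_self_add_left, norm_smul, Complex.norm_real, Real.norm_eq_abs,
    abs_of_nonneg (by positivity), div_mul_cancel₀ _ hv'] at this
  exact lt_irrefl _ this

lemma bdist_pos [Nontrivial E] {D : Set E} (hD : IsOpen D) (hb : Bornology.IsBounded D) {x : E}
    (hx : x ∈ D) : 0 < bdist D x := by
  obtain ⟨v, hv⟩ := exists_ne (0:E)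
  have hne : (frontier D).Nonempty := (frontier_nonempty_line hD hb hx hv).mono inter_subset_left
  refine (isClosed_frontier.notMem_iff_infDist_pos hne).1 fun h => ?_
  rw [hD.frontier_eq] at h
  exact h.2 hx

lemma schwarz_halfplane {F : ℂ → ℂ} (hF : DifferentiableOn ℂ F (ball 0 1))
    (hpos : ∀ w ∈ ball (0:ℂ) 1, 0 < (F w).re) : ‖deriv F 0‖ ≤ 2 * (F 0).re := by
  have h0 : 0 < (F 0).re := hpos 0 (by simp)
  have hne : ∀ w ∈ ball (0:ℂ) 1, F w + (starRingEnd ℂ) (F 0) ≠ 0 := by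
    intro w hw h
    have := congrArg Complex.re h
    simp at this
    linarith [hpos w hw]
  let G : ℂ → ℂ := fun w => (F w - F 0) / (F w + (starRingEnd ℂ) (F 0))
  have hG : DifferentiableOn ℂ G (ball 0 1) :=
    (hF.sub_const _).div (hF.add_const _) hne
  have hG0 : G 0 = 0 := by simp [G]
  have hmaps : MapsTo G (ball 0 1) (closedBall (G 0) 1) := by
    intro w hw
    rw [hG0, mem_closedBall, dist_zero_right, norm_div, div_le_one (norm_pos_iff.2 (hne w hw))]
    rw [← sq_le_sq₀ (norm_nonneg _) (norm_nonneg _), ← Complex.normSq_eq_norm_sq,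
      ← Complex.normSq_eq_norm_sq, Complex.normSq_apply, Complex.normSq_apply]
    have := hpos w hw
    simp
    nlinarith
  have h1 := Complex.norm_deriv_le_one_of_mapsTo_ball hG hmaps one_pos
  have hd : HasDerivAt F (deriv F 0) 0 :=
    (hF.differentiableAt (ball_mem_nhds _ one_pos)).hasDerivAt
  have hd2 := (hd.sub_const (F 0)).div (hd.add_const ((starRingEnd ℂ) (F 0))) (hne 0 (by simp))
  have h2 : deriv G 0 = deriv F 0 / (2 * (F 0).re : ℝ) := by
    refine hd2.deriv.trans ?_
    have e : F 0 + (starRingEnd ℂ) (F 0) = ((2 * (F 0).re : ℝ) : ℂ) := by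
      rw [Complex.add_conj]; 
    have e0 : ((2 * (F 0).re : ℝ) : ℂ) ≠ 0 := by exact_mod_cast (by positivity)
    rw [e, sub_self, zero_mul, sub_zero]
    field_simp
  rw [h2, norm_div, Complex.norm_real, Real.norm_eq_abs, abs_of_pos (by positivity),
    div_le_one (by positivity)] at h1
  exact h1

/-- Harnack type estimate for a supporting functional. -/
lemma disc_functional {D : Set E} {x p : E} {f : ℂ → E} (hf : IsDisc D x f)
    (l : StrongDual ℂ E) (hl : ∀ a ∈ D, (l a).re < (l p).re) :
    ‖l (deriv f 0)‖ ≤ 2 * (l (p - x)).re := by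
  have hd0 : DifferentiableAt ℂ f 0 := hf.1.differentiableAt (ball_mem_nhds _ one_pos)
  have h := schwarz_halfplane (F := fun w => l p - l (f w))
    ((differentiableOn_const _).sub (l.differentiable.comp_differentiableOn hf.1))
    (fun w hw => by simpa using hl _ (hf.2.1 hw))
  have h2 : HasDerivAt (fun w => l p - l (f w)) (-(l (deriv f 0))) 0 :=
    (l.hasFDerivAt.comp_hasDerivAt (0:ℂ) hd0.hasDerivAt).const_sub (l p)
  rw [h2.deriv, norm_neg] at h
  simpa [hf.2.2] using h

lemma disc_dir {D : Set E} (hD : IsOpen D) (hb : Bornology.IsBounded D) (hc : Convex ℝ D)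
    {x : E} {f : ℂ → E} (hf : IsDisc D x f) :
    ‖deriv f 0‖ ≤ 2 * bdistDir D x (deriv f 0) := by
  have hx : x ∈ D := by rw [← hf.2.2]; exact hf.2.1 (by simp)
  by_cases hv : deriv f 0 = 0
  · rw [hv, norm_zero]; exact mul_nonneg zero_le_two infDist_nonneg
  suffices h : ‖deriv f 0‖ / 2 ≤ bdistDir D x (deriv f 0) by linarith
  refine (le_infDist (frontier_nonempty_line hD hb hx hv)).2 ?_
  rintro p ⟨hp, c, hpc⟩
  have hpD : p ∉ D := by rw [hD.frontier_eq] at hp; exact hp.2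
  obtain ⟨l, hl⟩ := RCLike.geometric_hahn_banach_open_point (𝕜 := ℂ) hc hD hpD
  have h1 := disc_functional hf l hl
  have h2 : (l (p - x)).re ≤ ‖c‖ * ‖l (deriv f 0)‖ := by
    refine (Complex.re_le_norm _).trans ?_
    rw [hpc, add_sub_cancel_left, map_smul, norm_smul]
  have h3 : 0 < ‖l (deriv f 0)‖ := by
    rcases (norm_nonneg (l (deriv f 0))).eq_or_lt with h | h
    · have := hl x hx
      have h4 : 0 < (l (p - x)).re := by simpa using this
      rw [← h, mul_zero] at h2
      linarith
    · exact h
  have h4 : 1 ≤ 2 * ‖c‖ := by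
    by_contra! h
    nlinarith
  rw [hpc, dist_self_add_right, norm_smul]
  nlinarith [norm_nonneg (deriv f 0)]

/-- Comparison of boundary distances through a supporting functional. -/
lemma bdist_functional {D : Set E} (hD : IsOpen D) {x z p : E} (hx : x ∈ D) (hz : z ∈ D)
    (hzp : dist z p = bdist D z) (l : StrongDual ℂ E) (hl : ∀ a ∈ D, (l a).re < (l p).re) :
    bdist D x * (l (p - z)).re ≤ bdist D z * (l (p - x)).re := by
  by_contra! h
  have hz0 : 0 < (l (p - z)).re := by simpa using hl z hz
  have hx0 : 0 < (l (p - x)).re := by simpa using hl x hx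
  have hzb : 0 < bdist D z := by
    rw [← hzp]; refine dist_pos.2 fun h => ?_
    rw [h] at hz0; simp at hz0
  set s : ℝ := (l (p - x)).re / (l (p - z)).re with hs
  have hs0 : 0 < s := by positivity
  have hmem : x + (s : ℂ) • (p - z) ∈ D := by
    apply ball_bdist_subset hD hx
    rw [mem_ball, dist_self_add_left, norm_smul, Complex.norm_real, Real.norm_eq_abs,
      abs_of_pos hs0, ← dist_eq_norm, dist_comm, hzp, hs, div_mul_eq_mul_div, div_lt_iff₀ hz0]
    linarith
  have := hl _ hmem
  rw [map_add, map_smul] at this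
  simp only [Complex.add_re, smul_eq_mul, Complex.re_ofReal_mul] at this
  rw [hs, div_mul_cancel₀ _ hz0.ne'] at this
  simp at this

lemma log_disc {D : Set E} {C ν : ℝ} (h : LogTypeConvexWith D C ν) {x : E} {f : ℂ → E}
    (hf : IsDisc D x f) : ‖deriv f 0‖ ≤ 2 * (C / |Real.log (bdist D x)| ^ (1 + ν)) := by
  obtain ⟨hD, -, hb, hc, hC, hν, hlog⟩ := h
  have hx : x ∈ D := by rw [← hf.2.2]; exact hf.2.1 (by simp)
  by_cases hv : deriv f 0 = 0
  · rw [hv, norm_zero]; positivity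
  · have := disc_dir hD hb hc hf
    linarith [hlog x hx _ hv]

/-- Crude localisation. -/
lemma disc_move {Ω : Set E} {M ε : ℝ} (hM : ∀ x ∈ Ω, ∀ y ∈ Ω, dist x y ≤ M) (hM0 : 0 < M)
    {z : E} {f : ℂ → E} (hf : IsDisc Ω z f) {a w : ℂ} (ha : ‖a‖ < 1) (hε : 0 < ε) (hεM : ε ≤ M)
    (hw : ‖w - a‖ < ε / M * (1 - ‖a‖)) : ‖w‖ < 1 ∧ dist (f w) (f a) < ε := by
  have hsub : ball a (1 - ‖a‖) ⊆ ball (0:ℂ) 1 := by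
    intro u hu
    rw [mem_ball, dist_eq_norm] at hu
    rw [mem_ball, dist_zero_right]
    have := norm_add_le (u - a) a
    rw [sub_add_cancel] at this
    linarith
  have h1 : ε / M ≤ 1 := (div_le_one hM0).2 hεM
  have hwb : w ∈ ball a (1 - ‖a‖) := by
    rw [mem_ball, dist_eq_norm]; nlinarith
  refine ⟨by simpa using hsub hwb, ?_⟩
  have h2 := Complex.dist_le_div_mul_dist_of_mapsTo_ball (R₂ := M) (hf.1.mono hsub)
    (fun u hu => hM _ (hf.2.1 (hsub hu)) _ (hf.2.1 (by simpa using ha))) hwb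
  refine h2.trans_lt ?_
  rw [dist_eq_norm]
  have h3 : 0 < 1 - ‖a‖ := by linarith
  calc M / (1 - ‖a‖) * ‖w - a‖ < M / (1 - ‖a‖) * (ε / M * (1 - ‖a‖)) := by gcongr
    _ = ε := by field_simp

lemma local_disc {Ω U : Set E} {M ε : ℝ} (hM : ∀ x ∈ Ω, ∀ y ∈ Ω, dist x y ≤ M) (hM0 : 0 < M)
    (hε : 0 < ε) (hεM : ε ≤ M) {ξ : E} (hU : ball ξ (4 * ε) ⊆ U)
    {z : E} {f : ℂ → E} (hf : IsDisc Ω z f) {a : ℂ} (ha : ‖a‖ < 1) (hfa : dist (f a) ξ ≤ 3 * ε) :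
    IsDisc (Ω ∩ U) (f a) (fun w => f (a + ((ε / M * (1 - ‖a‖) : ℝ) : ℂ) * w)) ∧
    deriv (fun w => f (a + ((ε / M * (1 - ‖a‖) : ℝ) : ℂ) * w)) 0 =
      ((ε / M * (1 - ‖a‖) : ℝ) : ℂ) • deriv f a := by
  have hr : 0 < ε / M * (1 - ‖a‖) := mul_pos (by positivity) (by linarith)
  set r := ε / M * (1 - ‖a‖) with hrdef
  have key : ∀ w ∈ ball (0:ℂ) 1, ‖a + (r:ℂ) * w‖ < 1 ∧ dist (f (a + (r:ℂ) * w)) (f a) < ε := by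
    intro w hw
    refine disc_move hM hM0 hf ha hε hεM ?_
    rw [add_sub_cancel_left, norm_mul, Complex.norm_real, Real.norm_eq_abs, abs_of_pos hr, ← hrdef]
    rw [mem_ball, dist_zero_right] at hw
    nlinarith [norm_nonneg w]
  refine ⟨⟨?_, fun w hw => ⟨?_, ?_⟩, by simp⟩, ?_⟩
  · exact hf.1.comp (by fun_prop) fun w hw => by simpa using (key w hw).1
  · exact hf.2.1 (by simpa using (key w hw).1)
  · apply hU
    rw [mem_ball]
    have := dist_triangle (f (a + (r:ℂ) * w)) (f a) ξ
    linarith [(key w hw).2]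
  · exact deriv_comp_scale f (hf.1.differentiableAt (isOpen_ball.mem_nhds (by simpa using ha)))

end Geom

/-! ### Localisation of the Kobayashi metric -/

section Loc

variable {E : Type*} [NormedAddCommGroup E] [NormedSpace ℂ E]

/-- The standing assumptions. -/
structure Setup (Ω U : Set E) (ξ : E) (C ν M ε : ℝ) : Prop where
  hΩ : IsOpen Ω
  hM : ∀ x ∈ Ω, ∀ y ∈ Ω, dist x y ≤ M
  hM0 : 0 < M
  hε : 0 < ε
  hεM : ε ≤ M
  hU : ball ξ (4 * ε) ⊆ U
  hlog : LogTypeConvexWith (Ω ∩ U) C ν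

variable {Ω U : Set E} {ξ : E} {C ν M ε : ℝ}

lemma Setup.mem (S : Setup Ω U ξ C ν M ε) {x : E} (hx : x ∈ Ω) (h : dist x ξ ≤ 3 * ε) :
    x ∈ Ω ∩ U := ⟨hx, S.hU (by rw [mem_ball]; linarith [S.hε])⟩

lemma Setup.r0_pos (S : Setup Ω U ξ C ν M ε) : 0 < ε / M := div_pos S.hε S.hM0

lemma Setup.deriv_log (S : Setup Ω U ξ C ν M ε) {z : E} {f : ℂ → E} (hf : IsDisc Ω z f) {a : ℂ}
    (ha : ‖a‖ < 1) (hfa : dist (f a) ξ ≤ 3 * ε) :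
    (ε / M * (1 - ‖a‖)) * ‖deriv f a‖ ≤
      2 * (C / |Real.log (bdist (Ω ∩ U) (f a))| ^ (1 + ν)) := by
  obtain ⟨h1, h2⟩ := local_disc S.hM S.hM0 S.hε S.hεM S.hU hf ha hfa
  have := log_disc S.hlog h1
  rwa [h2, norm_smul, Complex.norm_real, Real.norm_eq_abs,
    abs_of_pos (mul_pos S.r0_pos (by linarith))] at this

lemma Setup.deriv_fun (S : Setup Ω U ξ C ν M ε) {z : E} {f : ℂ → E} (hf : IsDisc Ω z f) {a : ℂ}
    (ha : ‖a‖ < 1) (hfa : dist (f a) ξ ≤ 3 * ε) {p : E}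
    (l : StrongDual ℂ E) (hl : ∀ a ∈ Ω ∩ U, (l a).re < (l p).re) :
    (ε / M * (1 - ‖a‖)) * ‖l (deriv f a)‖ ≤ 2 * (l (p - f a)).re := by
  obtain ⟨h1, h2⟩ := local_disc S.hM S.hM0 S.hε S.hεM S.hU hf ha hfa
  have := disc_functional h1 l hl
  rwa [h2, map_smul, norm_smul, Complex.norm_real, Real.norm_eq_abs,
    abs_of_pos (mul_pos S.r0_pos (by linarith))] at this

lemma disc_ray {z : E} {f : ℂ → E} (hf : IsDisc Ω z f) {ζ : ℂ} (hζ : ‖ζ‖ = 1) {s : ℝ}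
    (h0 : 0 ≤ s) (h1 : s < 1) : ‖(s:ℂ) * ζ‖ = s ∧
    HasDerivAt (fun s : ℝ => f ((s:ℂ) * ζ)) (ζ • deriv f ((s:ℂ) * ζ)) s := by
  have hn : ‖(s:ℂ) * ζ‖ = s := by simp [hζ, abs_of_nonneg h0]
  refine ⟨hn, ?_⟩
  have hd : HasDerivAt f (deriv f ((s:ℂ) * ζ)) ((s:ℂ) * ζ) :=
    (hf.1.differentiableAt (isOpen_ball.mem_nhds (by simpa [hζ, abs_of_nonneg h0] using h1))).hasDerivAt
  have hm : HasDerivAt (fun s : ℝ => (s:ℂ) * ζ) ζ s := by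
    simpa using (Complex.ofRealCLM.hasDerivAt (x := s)).mul_const ζ
  exact hd.scomp s hm

variable [ProperSpace E] [Nontrivial E]

/-- growth of boundary distance along a ray -/
lemma Setup.ray_bdist (S : Setup Ω U ξ C ν M ε) {z : E} {f : ℂ → E} (hf : IsDisc Ω z f) {ζ : ℂ}
    (hζ : ‖ζ‖ = 1) {s : ℝ} (h0 : 0 ≤ s) (h1 : s < 1)
    (hs : ∀ t ∈ Icc 0 s, dist (f ((t:ℂ) * ζ)) ξ ≤ 3 * ε) :
    bdist (Ω ∩ U) (f ((s:ℂ) * ζ)) * (1 - s) ^ (2 / (ε / M)) ≤ bdist (Ω ∩ U) z := by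
  obtain ⟨hD, -, hb, hc, hC, hν, hlog⟩ := S.hlog
  have hf0 : f ((0:ℝ) * ζ) = z := by simpa using hf.2.2
  have hmem : ∀ t ∈ Icc 0 s, f ((t:ℂ) * ζ) ∈ Ω ∩ U := fun t ht =>
    S.mem (hf.2.1 (by rw [mem_ball, dist_zero_right, (disc_ray hf hζ ht.1 (ht.2.trans_lt h1)).1]
                      linarith [ht.2])) (hs t ht)
  have hz : z ∈ Ω ∩ U := hf0 ▸ hmem 0 ⟨le_rfl, h0⟩
  obtain ⟨v, hv⟩ := exists_ne (0:E)
  have hne : (frontier (Ω ∩ U)).Nonempty :=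
    (frontier_nonempty_line hD hb hz hv).mono inter_subset_left
  obtain ⟨p, hp, hpd⟩ := isClosed_frontier.exists_infDist_eq_dist hne z
  have hpD : p ∉ Ω ∩ U := by rw [hD.frontier_eq] at hp; exact hp.2
  obtain ⟨l, hl⟩ := RCLike.geometric_hahn_banach_open_point (𝕜 := ℂ) hc hD hpD
  set c := 2 / (ε / M) with hcdef
  have hr0 := S.r0_pos
  set h : ℝ → ℝ := fun t => (l (p - f ((t:ℂ) * ζ))).re with hh
  have hder : ∀ t ∈ Icc 0 s, HasDerivAt h (-(l (ζ • deriv f ((t:ℂ) * ζ))).re) t := by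
    intro t ht
    have h2 := (disc_ray hf hζ ht.1 (ht.2.trans_lt h1)).2
    have h3 := ((l.restrictScalars ℝ).hasFDerivAt.comp_hasDerivAt t (h2.const_sub p))
    have h4 : HasDerivAt h (Complex.reCLM (l (-(ζ • deriv f ((t:ℂ) * ζ))))) t :=
      Complex.reCLM.hasFDerivAt.comp_hasDerivAt t h3
    rw [map_neg, map_neg] at h4
    exact h4
  have hG : ∀ t ∈ Icc 0 s, HasDerivAt (fun t => h t * (1 - t) ^ c)
      ((-(l (ζ • deriv f ((t:ℂ) * ζ))).re) * (1 - t) ^ c +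
        h t * ((-1) * c * (1 - t) ^ (c - 1))) t := by
    intro t ht
    have ht1 : 0 < 1 - t := by linarith [ht.2]
    have h5 : HasDerivAt (fun t : ℝ => (1 - t)) (-1) t := by
      simpa using (hasDerivAt_id t).const_sub 1
    exact (hder t ht).mul (h5.rpow_const (Or.inl ht1.ne'))
  have hanti : AntitoneOn (fun t => h t * (1 - t) ^ c) (Icc 0 s) := by
    refine antitoneOn_of_deriv_nonpos (convex_Icc 0 s)
      (fun t ht => (hG t ht).continuousAt.continuousWithinAt) 
      (fun t ht => (hG t (interior_subset ht)).differentiableAt.differentiableWithinAt) ?_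
    intro t ht'
    have ht := interior_subset ht'
    rw [(hG t ht).deriv]
    have ht1 : 0 < 1 - t := by linarith [ht.2]
    have hn := (disc_ray hf hζ ht.1 (ht.2.trans_lt h1)).1
    have h6 := S.deriv_fun hf (a := (t:ℂ) * ζ) (by rw [hn]; linarith) (hs t ht) l hl
    rw [hn] at h6
    have h7 : -(l (ζ • deriv f ((t:ℂ) * ζ))).re ≤ ‖l (deriv f ((t:ℂ) * ζ))‖ := by
      refine (neg_le_abs _).trans ((Complex.abs_re_le_norm _).trans ?_)
      rw [map_smul, norm_smul, hζ, one_mul]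
    have h8 : -(l (ζ • deriv f ((t:ℂ) * ζ))).re * (1 - t) ≤ h t * c := by
      rw [hcdef, ← mul_div_assoc, le_div_iff₀ hr0]
      calc _ ≤ ‖l (deriv f ((t:ℂ) * ζ))‖ * (1 - t) * (ε / M) := by gcongr
        _ = (ε / M * (1 - t)) * ‖l (deriv f ((t:ℂ) * ζ))‖ := by ring
        _ ≤ _ := by linarith
    have h9 : (1 - t) ^ c = (1 - t) ^ (c - 1) * (1 - t) := by
      rw [← Real.rpow_add_one ht1.ne']; simp
    rw [h9]
    have := Real.rpow_nonneg ht1.le (c - 1)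
    nlinarith
  have h10 := hanti (left_mem_Icc.2 h0) (right_mem_Icc.2 h0) h0
  have h11 := bdist_functional hD (hmem s ⟨h0, le_rfl⟩) hz hpd.symm l hl
  have hpos : 0 < (l (p - z)).re := by simpa using hl z hz
  simp only [hh, hf0, sub_zero, Real.one_rpow, mul_one] at h10
  have hb0 : 0 ≤ bdist (Ω ∩ U) z := infDist_nonneg
  have h12 : 0 ≤ (1 - s) ^ c := Real.rpow_nonneg (by linarith) _
  refine le_of_mul_le_mul_right ?_ hpos
  calc bdist (Ω ∩ U) (f ((s:ℂ) * ζ)) * (1 - s) ^ c * (l (p - z)).re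
      = (bdist (Ω ∩ U) (f ((s:ℂ) * ζ)) * (l (p - z)).re) * (1 - s) ^ c := by ring
    _ ≤ (bdist (Ω ∩ U) z * (l (p - f ((s:ℂ) * ζ))).re) * (1 - s) ^ c := by gcongr
    _ = bdist (Ω ∩ U) z * ((l (p - f ((s:ℂ) * ζ))).re * (1 - s) ^ c) := by ring
    _ ≤ _ := by gcongr

/-- discs centred near the boundary stay local on a large subdisc -/
lemma Setup.disc_stays (S : Setup Ω U ξ C ν M ε) {z : E} (hzξ : dist z ξ ≤ 2 * ε) {f : ℂ → E}
    (hf : IsDisc Ω z f) (hsmall : bdist (Ω ∩ U) z < Real.exp (-(2 * (C / ε) ^ (1 / ν))))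
    {w : ℂ} (hw : ‖w‖ < 1 - bdist (Ω ∩ U) z ^ (ε / M / 4)) : f w ∈ Ω ∩ U := by
  obtain ⟨hD, -, hb, hc, hC, hν, hlog⟩ := S.hlog
  have hε := S.hε
  have hr0 := S.r0_pos
  have hzΩ : z ∈ Ω := by rw [← hf.2.2]; exact hf.2.1 (by simp)
  have hz : z ∈ Ω ∩ U := S.mem hzΩ (by linarith)
  have hδ0 := bdist_pos hD hb hz
  set δ := bdist (Ω ∩ U) z with hδ
  set r0 := ε / M with hr0def
  have hδβ : 0 < δ ^ (r0 / 4) := by positivity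
  have hw1 : ‖w‖ < 1 := by linarith
  have hfw : f w ∈ Ω := hf.2.1 (by simpa using hw1)
  suffices hlt : dist (f w) z < ε by
    exact S.mem hfw (by linarith [dist_triangle (f w) z ξ])
  by_contra! hge
  have hw0 : w ≠ 0 := by
    rintro rfl; rw [hf.2.2, dist_self] at hge; linarith
  have hwn : ‖w‖ ≠ 0 := norm_ne_zero_iff.2 hw0
  have hwp : 0 < ‖w‖ := norm_pos_iff.2 hw0
  set ζ : ℂ := w / ‖w‖ with hζdef
  have hζ : ‖ζ‖ = 1 := by simp [hζdef, hwn]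
  have hwζ : ((‖w‖ : ℝ) : ℂ) * ζ = w := by
    rw [hζdef, mul_div_cancel₀]; exact_mod_cast hwn
  set γ : ℝ → E := fun s => f ((s:ℂ) * ζ) with hγ
  have hγc : ContinuousOn γ (Icc 0 ‖w‖) := fun s hs =>
    (disc_ray hf hζ hs.1 (hs.2.trans_lt hw1)).2.continuousAt.continuousWithinAt
  have hγ0 : γ 0 = z := by simpa [hγ] using hf.2.2
  obtain ⟨s1, hs1, hs1l⟩ : ∃ s1, IsLeast {s ∈ Icc 0 ‖w‖ | ε ≤ dist (γ s) z} s1 := by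
    have hcl : IsClosed {s ∈ Icc 0 ‖w‖ | ε ≤ dist (γ s) z} :=
      isClosed_Icc.isClosed_le continuousOn_const (continuous_dist.comp_continuousOn (hγc.prodMk continuousOn_const))
    exact (isCompact_Icc.of_isClosed_subset hcl (sep_subset _ _)).exists_isLeast
      ⟨‖w‖, ⟨hwp.le, le_rfl⟩, by simpa only [hγ, hwζ] using hge⟩
  have hs10 : 0 ≤ s1 := hs1.1.1
  have hs1w : s1 ≤ ‖w‖ := hs1.1.2
  have hlt : ∀ s ∈ Ico 0 s1, dist (γ s) ξ ≤ 3 * ε := by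
    intro s hs
    have : dist (γ s) z < ε := by
      by_contra! h
      exact absurd (hs1l ⟨⟨hs.1, hs.2.le.trans hs1w⟩, h⟩) (not_le.2 hs.2)
    linarith [dist_triangle (γ s) z ξ]
  -- the constants
  set Λ := -Real.log δ with hΛ
  have hX : 0 < C / ε := by positivity
  have hΛbig : 2 * (C / ε) ^ (1 / ν) < Λ := by
    have := Real.log_lt_log hδ0 hsmall
    rw [Real.log_exp] at this
    linarith
  have hXp : 0 < (C / ε) ^ (1 / ν) := by positivity
  have hΛ0 : 0 < Λ := by linarith
  have hC4 : C * (Λ / 2) ^ (-ν) < ε := by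
    have h1 : C / ε < (Λ / 2) ^ ν := by
      have := Real.rpow_lt_rpow hXp.le (show (C / ε) ^ (1 / ν) < Λ / 2 by linarith) hν
      rwa [← Real.rpow_mul hX.le, one_div_mul_cancel hν.ne', Real.rpow_one] at this
    rw [Real.rpow_neg (by positivity), ← div_eq_mul_inv, div_lt_iff₀ (by positivity)]
    rw [div_lt_iff₀ hε] at h1
    linarith
  set K := 2 * C / r0 * (Λ / 2) ^ (-(1 + ν)) with hK
  have hK0 : 0 < K := by positivity
  have hbound : ∀ s ∈ Ico 0 s1, ‖ζ • deriv f ((s:ℂ) * ζ)‖ ≤ K / (1 - s) := by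
    intro s hs
    have hs1' : s < 1 := by linarith [hs.2]
    have hp1 : 0 < 1 - s := by linarith
    obtain ⟨hn, -⟩ := disc_ray hf hζ hs.1 hs1'
    have h1 := S.ray_bdist hf hζ hs.1 hs1' fun t ht => hlt t ⟨ht.1, ht.2.trans_lt hs.2⟩
    have h2 := S.deriv_log hf (a := (s:ℂ) * ζ) (by rw [hn]; exact hs1') (hlt s hs)
    rw [hn] at h2
    have hmem : f ((s:ℂ) * ζ) ∈ Ω ∩ U := S.mem (hf.2.1 (by rw [mem_ball, dist_zero_right, hn]; exact hs1')) (hlt s hs)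
    have hb0 := bdist_pos hD hb hmem
    have h3 : Real.log (bdist (Ω ∩ U) (f ((s:ℂ) * ζ))) ≤ -(Λ / 2) := by
      have h4 := Real.log_le_log (by positivity) h1
      rw [Real.log_mul hb0.ne' (by positivity), Real.log_rpow hp1] at h4
      have h5 : Real.log (δ ^ (r0 / 4)) ≤ Real.log (1 - s) :=
        Real.log_le_log hδβ (by linarith [hs.2])
      rw [Real.log_rpow hδ0] at h5
      have h6 : 2 / r0 * (r0 / 4 * Real.log δ) ≤ 2 / r0 * Real.log (1 - s) := by gcongr
      have h7 : 2 / r0 * (r0 / 4 * Real.log δ) = Real.log δ / 2 := by field_simp; norm_num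
      rw [h7] at h6
      rw [← hδ, ← hr0def] at h4
      have h8 : Λ / 2 = -(Real.log δ / 2) := by rw [hΛ]; ring
      rw [h8]; linarith
    have h9 : Λ / 2 ≤ |Real.log (bdist (Ω ∩ U) (f ((s:ℂ) * ζ)))| := by
      rw [abs_of_neg (by linarith)]; linarith
    have h10 : 2 * (C / |Real.log (bdist (Ω ∩ U) (f ((s:ℂ) * ζ)))| ^ (1 + ν)) ≤
        2 * (C / (Λ / 2) ^ (1 + ν)) := by gcongr
    rw [norm_smul, hζ, one_mul, le_div_iff₀ hp1, hK, Real.rpow_neg (by positivity)]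
    have h11 := h2.trans h10
    calc ‖deriv f ((s:ℂ) * ζ)‖ * (1 - s)
        = (r0 * (1 - s) * ‖deriv f ((s:ℂ) * ζ)‖) / r0 := by field_simp
      _ ≤ (2 * (C / (Λ / 2) ^ (1 + ν))) / r0 := by gcongr
      _ = _ := by ring
  have hBd : ∀ s ∈ Icc 0 s1, HasDerivAt (fun s => -(K * Real.log (1 - s))) (K / (1 - s)) s := by
    intro s hs
    have hp : 1 - s ≠ 0 := by have := hs.2; intro h; linarith
    have h5 : HasDerivAt (fun t : ℝ => (1 - t)) (-1) s := by
      simpa using (hasDerivAt_id s).const_sub 1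
    have e : K / (1 - s) = -(K * (-1 / (1 - s))) := by ring
    rw [e]
    exact ((h5.log hp).const_mul K).neg
  have hmv := image_norm_le_of_norm_deriv_right_le_deriv_boundary' (f := fun s => γ s - z)
    (f' := fun s => ζ • deriv f ((s:ℂ) * ζ)) (a := 0) (b := s1)
    (B := fun s => -(K * Real.log (1 - s))) (B' := fun s => K / (1 - s))
    ((hγc.mono (Icc_subset_Icc_right hs1w)).sub continuousOn_const)
    (fun s hs => ((disc_ray hf hζ hs.1 (by linarith [hs.2])).2.sub_const z).hasDerivWithinAt)
    (by simp [hγ0]) (fun s hs => (hBd s hs).continuousAt.continuousWithinAt)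
    (fun s hs => (hBd s (Ico_subset_Icc_self hs)).hasDerivWithinAt) hbound (right_mem_Icc.2 hs10)
  · have h1 : ε ≤ ‖γ s1 - z‖ := by rw [← dist_eq_norm]; exact hs1.2
    have h5 : Real.log (δ ^ (r0 / 4)) ≤ Real.log (1 - s1) :=
      Real.log_le_log hδβ (by linarith)
    rw [Real.log_rpow hδ0] at h5
    have h6 : -(K * Real.log (1 - s1)) ≤ K * (r0 / 4 * Λ) := by
      rw [hΛ]; nlinarith
    have h7 : K * (r0 / 4 * Λ) = C * (Λ / 2) ^ (-ν) := by
      have : (Λ / 2) ^ (-ν) = (Λ / 2) ^ (-(1 + ν)) * (Λ / 2) := by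
        rw [← Real.rpow_add_one (by positivity)]; congr 1; ring
      rw [this, hK]; field_simp; norm_num
    have h8 : ‖γ s1 - z‖ ≤ -(K * Real.log (1 - s1)) := hmv
    linarith

end Loc

section LocMetric

variable {E : Type*} [NormedAddCommGroup E] [NormedSpace ℂ E]
variable {Ω U : Set E} {ξ : E} {C ν M ε : ℝ}

lemma Setup.crude (S : Setup Ω U ξ C ν M ε) {z : E} (hz : z ∈ Ω) (hzξ : dist z ξ ≤ 2 * ε) (v : E) :
    kobMetric (Ω ∩ U) z v ≤ kobMetric Ω z v / (ε / M) := by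
  have hr0 := S.r0_pos
  rw [le_div_iff₀ hr0]
  refine le_kobMetric S.hΩ hz fun f η hf hv => ?_
  rw [← le_div_iff₀ hr0]
  refine kobMetric_le_of_shrink hr0 ((div_le_one S.hM0).2 S.hεM) hf hv fun w hw => ?_
  obtain ⟨h1, h2⟩ := disc_move S.hM S.hM0 hf (a := 0) (w := w) (by simp) S.hε S.hεM
    (by simpa using hw)
  rw [hf.2.2] at h2
  exact S.mem (hf.2.1 (by simpa using h1)) (by linarith [dist_triangle (f w) z ξ])

lemma Setup.lower (S : Setup Ω U ξ C ν M ε) {z : E} (hz : z ∈ Ω) (hzξ : dist z ξ ≤ 2 * ε) (v : E) :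
    ‖v‖ * |Real.log (bdist (Ω ∩ U) z)| ^ (1 + ν) ≤ 2 * C / (ε / M) * kobMetric Ω z v := by
  have hr0 := S.r0_pos
  have hC := S.hlog.2.2.2.2.1
  have hX : 0 < 2 * C / (ε / M) := by positivity
  rw [mul_comm (2 * C / (ε / M)), ← div_le_iff₀ hX]
  refine le_kobMetric S.hΩ hz fun f η hf hv => ?_
  rw [div_le_iff₀ hX]
  have h1 := S.deriv_log hf (a := 0) (by simp) (by rw [hf.2.2]; linarith [S.hε])
  rw [hf.2.2, norm_zero, sub_zero, mul_one] at h1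
  set Y := |Real.log (bdist (Ω ∩ U) z)| ^ (1 + ν) with hY
  have hY0 : 0 ≤ Y := by positivity
  rcases hY0.eq_or_lt with h | h
  · rw [← h, mul_zero]; positivity
  · rw [← hv, norm_smul]
    rw [← mul_div_assoc, le_div_iff₀ h] at h1
    have h2 : ‖deriv f 0‖ * Y ≤ 2 * C / (ε / M) := by
      rw [le_div_iff₀ hr0]; linarith
    rw [mul_assoc]
    gcongr

variable [ProperSpace E] [Nontrivial E]

lemma Setup.sharp (S : Setup Ω U ξ C ν M ε) : ∃ A : ℝ, 0 < A ∧ ∀ z ∈ Ω, dist z ξ ≤ 2 * ε → ∀ v : E,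
    kobMetric (Ω ∩ U) z v ≤ (1 + A * bdist (Ω ∩ U) z ^ (ε / M / 4)) * kobMetric Ω z v := by
  have hr0 := S.r0_pos
  set r0 := ε / M with hr0def
  set β := r0 / 4 with hβ
  have hβ0 : 0 < β := by positivity
  set δ1 := min (Real.exp (-(2 * (C / ε) ^ (1 / ν)))) ((1 / 2 : ℝ) ^ (1 / β)) with hδ1
  have hδ10 : 0 < δ1 := lt_min (Real.exp_pos _) (by positivity)
  have hδ1β : 0 < δ1 ^ β := by positivity
  refine ⟨2 + 1 / (r0 * δ1 ^ β), by positivity, fun z hz hzξ v => ?_⟩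
  have hzD := S.mem hz (by linarith [S.hε])
  have hk := kobMetric_nonneg Ω z v
  have hδ0 := bdist_pos S.hlog.1 S.hlog.2.2.1 hzD
  set δ := bdist (Ω ∩ U) z with hδ
  have hx0 : 0 < δ ^ β := by positivity
  have h1p : 0 < 1 / (r0 * δ1 ^ β) := by positivity
  by_cases h : δ < δ1
  · have hx : δ ^ β ≤ 1 / 2 := by
      have h2 : δ ≤ (1 / 2 : ℝ) ^ (1 / β) := (h.trans_le (min_le_right _ _)).le
      have := Real.rpow_le_rpow hδ0.le h2 hβ0.le
      rwa [← Real.rpow_mul (by norm_num), one_div_mul_cancel hβ0.ne', Real.rpow_one] at this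
    have hρ : 0 < 1 - δ ^ β := by linarith
    have h3 : kobMetric (Ω ∩ U) z v ≤ kobMetric Ω z v / (1 - δ ^ β) := by
      rw [le_div_iff₀ hρ]
      refine le_kobMetric S.hΩ hz fun f η hf hv => ?_
      rw [← le_div_iff₀ hρ]
      exact kobMetric_le_of_shrink hρ (by linarith) hf hv fun w hw =>
        S.disc_stays hzξ hf (h.trans_le (min_le_left _ _)) hw
    refine h3.trans ?_
    rw [div_le_iff₀ hρ]
    have h4 : 1 ≤ (1 + (2 + 1 / (r0 * δ1 ^ β)) * δ ^ β) * (1 - δ ^ β) := by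
      have h5 : 1 ≤ (1 + 2 * δ ^ β) * (1 - δ ^ β) := by nlinarith
      refine h5.trans ?_
      gcongr
      linarith
    nlinarith
  · push Not at h
    refine (S.crude hz hzξ v).trans ?_
    rw [div_eq_mul_one_div, mul_comm]
    gcongr
    have h6 : δ1 ^ β ≤ δ ^ β := by gcongr
    have h7 : 1 / r0 ≤ 1 / (r0 * δ1 ^ β) * δ ^ β := by
      rw [div_mul_eq_mul_div, div_le_div_iff₀ hr0 (by positivity)]
      nlinarith
    rw [← hr0def]
    nlinarith

end LocMetric

section Upper

variable {E : Type*} [NormedAddCommGroup E] [NormedSpace ℂ E]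

lemma ball_segment {D : Set E} (hc : Convex ℝ D) {z o : E} {ρ r t : ℝ} (hρ : 0 < ρ) (hr : 0 < r)
    (hz : ball z ρ ⊆ D) (ho : ball o r ⊆ D) (ht : t ∈ Icc (0:ℝ) 1) :
    ball (z + t • (o - z)) ((1 - t) * ρ + t * r) ⊆ D := by
  intro y hy
  have hR : 0 < (1 - t) * ρ + t * r := by
    rcases ht.1.eq_or_lt with h | h
    · rw [← h]; simpa using hρ
    · have : 0 ≤ (1 - t) * ρ := mul_nonneg (by linarith [ht.2]) hρ.le
      positivity
  set R := (1 - t) * ρ + t * r with hRdef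
  set u : E := R⁻¹ • (y - (z + t • (o - z))) with hu
  have hu1 : ‖u‖ < 1 := by
    rw [hu, norm_smul, norm_inv, Real.norm_eq_abs, abs_of_pos hR, inv_mul_lt_iff₀ hR, mul_one,
      ← dist_eq_norm]
    exact hy
  have hRu : R • u = y - (z + t • (o - z)) := by
    rw [hu, smul_smul, mul_inv_cancel₀ hR.ne', one_smul]
  have e : y = (1 - t) • (z + ρ • u) + t • (o + r • u) := by
    have : (1 - t) • (z + ρ • u) + t • (o + r • u) = (z + t • (o - z)) + R • u := by
      rw [hRdef]; module
    rw [this, hRu]; abel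
  rw [e]
  refine hc (hz ?_) (ho ?_) (by linarith [ht.2]) ht.1 (by ring)
  · rw [mem_ball, dist_self_add_left, norm_smul, Real.norm_eq_abs, abs_of_pos hρ]
    nlinarith
  · rw [mem_ball, dist_self_add_left, norm_smul, Real.norm_eq_abs, abs_of_pos hr]
    nlinarith

lemma bdist_le_diam [Nontrivial E] {D : Set E} (hD : IsOpen D) {M : ℝ}
    (hM : ∀ x ∈ D, ∀ y ∈ D, dist x y ≤ M) {z : E} (hz : z ∈ D) : bdist D z ≤ M := by
  obtain ⟨v, hv⟩ := exists_ne (0:E)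
  have hb : Bornology.IsBounded D := isBounded_iff.2 ⟨M, fun x hx y hy => hM x hx y hy⟩
  obtain ⟨p, hp, -⟩ := frontier_nonempty_line hD hb hz hv
  have h1 : closure D ⊆ closedBall z M :=
    closure_minimal (fun x hx => hM x hx z hz) isClosed_closedBall
  have h2 := h1 (frontier_subset_closure hp)
  rw [mem_closedBall, dist_comm] at h2
  exact (infDist_le_dist_of_mem hp).trans h2

variable [MeasurableSpace E] [BorelSpace E] [SecondCountableTopology E]

lemma PathLen.mono {D D' : Set E} (hD : IsOpen D) (hD' : IsOpen D') (hDD : D ⊆ D') {x y : E} {r : ℝ}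
    (h : PathLen D x y r) : ∃ r' ≤ r, PathLen D' x y r' := by
  obtain ⟨a, b, σ, g, h1, rfl, rfl, rfl⟩ := h
  have h2 : IsPath D' a b σ g := h1.mono (h1.2.2.mono_right hDD)
  refine ⟨_, ?_, a, b, σ, g, h2, rfl, rfl, rfl⟩
  exact intervalIntegral.integral_mono_on h1.1 (h2.integrable hD') (h1.integrable hD)
    fun t ht => kobMetric_anti hD hDD _ (h1.2.2 ht)

lemma path_to_center [Nontrivial E] [CompleteSpace E] {D : Set E} (hD : IsOpen D) (hc : Convex ℝ D) {M : ℝ}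
    (hM0 : 0 < M) (hM : ∀ x ∈ D, ∀ y ∈ D, dist x y ≤ M) {o : E} (ho : o ∈ D) :
    ∃ α C0 : ℝ, 0 < α ∧ 0 ≤ C0 ∧ ∀ z ∈ D, ∃ L, PathLen D z o L ∧
      L ≤ α * (-Real.log (bdist D z)) + C0 := by
  obtain ⟨r, hr, hor⟩ := Metric.isOpen_iff.1 hD o ho
  have hb : Bornology.IsBounded D := isBounded_iff.2 ⟨M, fun x hx y hy => hM x hx y hy⟩
  refine ⟨2 * M / r, 2 * M / r * (|Real.log (2 * r)| + |Real.log M| + |Real.log r|),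
    by positivity, by positivity, fun z hz => ?_⟩
  have hδ0 := bdist_pos hD hb hz
  set δ := bdist D z with hδ
  set ρ := min δ r with hρdef
  have hρ : 0 < ρ := lt_min hδ0 hr
  have hρr : ρ ≤ r := min_le_right _ _
  have hzρ : ball z ρ ⊆ D := (ball_subset_ball (min_le_left _ _)).trans (ball_bdist_subset hD hz)
  have hpath : IsPath D 0 1 (fun t : ℝ => z + t • (o - z)) (fun _ => o - z) := by
    refine ⟨zero_le_one, ⟨by simp, fun t ht => by simp [smul_sub]⟩, fun t ht => ?_⟩
    refine ball_segment hc hρ hr hzρ hor ht (mem_ball_self ?_)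
    rcases ht.1.eq_or_lt with h | h
    · rw [← h]; simpa using hρ
    · have : 0 ≤ (1 - t) * ρ := mul_nonneg (by linarith [ht.2]) hρ.le
      positivity
  refine ⟨_, ⟨0, 1, _, _, hpath, by simp, by simp, rfl⟩, ?_⟩
  have hpos : ∀ t ∈ Icc (0:ℝ) 1, 0 < ρ + t * r := fun t ht => by
    have := mul_nonneg ht.1 hr.le; linarith
  have hder : ∀ t ∈ uIcc (0:ℝ) 1, HasDerivAt (fun t => 2 * M / r * Real.log (ρ + t * r))
      (2 * M / (ρ + t * r)) t := by
    intro t ht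
    rw [uIcc_of_le zero_le_one] at ht
    have h1 : HasDerivAt (fun t : ℝ => ρ + t * r) r t := by
      simpa using ((hasDerivAt_id t).mul_const r).const_add ρ
    have e : 2 * M / (ρ + t * r) = 2 * M / r * (r / (ρ + t * r)) := by
      have := (hpos t ht).ne'
      field_simp
    rw [e]
    exact (h1.log (hpos t ht).ne').const_mul _
  have hcont : ContinuousOn (fun t => 2 * M / (ρ + t * r)) (uIcc 0 1) := by
    rw [uIcc_of_le zero_le_one]
    exact continuousOn_const.div (by fun_prop) fun t ht => (hpos t ht).ne'
  have hInt := intervalIntegral.integral_eq_sub_of_hasDerivAt hder hcont.intervalIntegrable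
  have hle : klen D 0 1 (fun t : ℝ => z + t • (o - z)) (fun _ => o - z) ≤
      ∫ t in (0:ℝ)..1, 2 * M / (ρ + t * r) := by
    refine intervalIntegral.integral_mono_on zero_le_one (hpath.integrable hD)
      hcont.intervalIntegrable fun t ht => ?_
    have hR : 0 < (ρ + t * r) / 2 := by linarith [hpos t ht]
    have h2 : (ρ + t * r) / 2 ≤ (1 - t) * ρ + t * r := by
      rcases le_total t (1/2) with h | h
      · nlinarith [ht.1]
      · nlinarith [ht.2]
    have h3 := kobMetric_le_of_ball (o - z) hR
      ((ball_subset_ball h2).trans (ball_segment hc hρ hr hzρ hor ht))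
    refine h3.trans ?_
    rw [div_div_eq_mul_div]
    have h4 : ‖o - z‖ ≤ M := by rw [← dist_eq_norm]; exact hM _ ho _ hz
    have := hpos t ht
    rw [mul_comm]
    gcongr
  refine hle.trans ?_
  rw [hInt]
  simp only [one_mul, zero_mul, add_zero]
  rw [← mul_sub, ← mul_add]
  gcongr
  have h5 : Real.log (ρ + r) ≤ |Real.log (2 * r)| :=
    (Real.log_le_log (by positivity) (by linarith)).trans (le_abs_self _)
  have h6 : -Real.log ρ ≤ -Real.log δ + (|Real.log M| + |Real.log r|) := by
    rcases min_choice δ r with h | h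
    · rw [hρdef, h]; linarith [abs_nonneg (Real.log M), abs_nonneg (Real.log r)]
    · rw [hρdef, h]
      have h7 : Real.log δ ≤ Real.log M := Real.log_le_log hδ0 (bdist_le_diam hD hM hz)
      linarith [le_abs_self (Real.log M), neg_le_abs (Real.log r)]
  linarith

end Upper

section Main

variable {E : Type*} [NormedAddCommGroup E] [NormedSpace ℂ E]
variable {Ω U : Set E} {ξ : E} {C ν M ε : ℝ}
variable [ProperSpace E] [Nontrivial E]
variable [MeasurableSpace E] [BorelSpace E] [SecondCountableTopology E]

/-- paths to the centre, of controlled length -/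
def Center (D : Set E) (o : E) (α C0 : ℝ) : Prop :=
  0 < α ∧ 0 ≤ C0 ∧ ∀ z ∈ D, ∃ L, PathLen D z o L ∧ L ≤ α * (-Real.log (bdist D z)) + C0

/-- a piece of a near-optimal path -/
structure Piece (Ω : Set E) (ξ : E) (ε a b t1 t2 : ℝ) (σ g : ℝ → E) : Prop where
  path : IsPath Ω a b σ g
  opt : klen Ω a b σ g ≤ kobDist Ω (σ a) (σ b) + 1
  h1 : a ≤ t1
  h12 : t1 ≤ t2
  h2 : t2 ≤ b
  near : ∀ t ∈ Icc t1 t2, dist (σ t) ξ ≤ 2 * ε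

lemma Setup.growth (S : Setup Ω U ξ C ν M ε) {o : E} {α C0 : ℝ} (hP : Center (Ω ∩ U) o α C0)
    {a b t1 t2 : ℝ} {σ g : ℝ → E} (P : Piece Ω ξ ε a b t1 t2 σ g) :
    ∃ t0 ∈ Icc t1 t2, (∀ t ∈ Icc t1 t2, bdist (Ω ∩ U) (σ t) ≤ bdist (Ω ∩ U) (σ t0)) ∧
      ∀ t ∈ Icc t1 t2, |∫ s in t0..t, kobMetric Ω (σ s) (g s)| ≤
        2 * α * (-Real.log (bdist (Ω ∩ U) (σ t))) + (2 * C0 + 1) := by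
  obtain ⟨hα, hC0, hP⟩ := hP
  obtain ⟨hD, -, hb, hc, hC, hν, hlog⟩ := S.hlog
  have hsub := P.path.sub P.h1 P.h12 P.h2
  have hmem : ∀ t ∈ Icc t1 t2, σ t ∈ Ω ∩ U := fun t ht =>
    S.mem (hsub.2.2 ht) (by linarith [P.near t ht, S.hε])
  have hcont : ContinuousOn (fun t => bdist (Ω ∩ U) (σ t)) (Icc t1 t2) :=
    (continuous_infDist_pt _).comp_continuousOn hsub.continuousOn
  obtain ⟨t0, ht0, hmax⟩ := isCompact_Icc.exists_isMaxOn (nonempty_Icc.2 P.h12) hcont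
  refine ⟨t0, ht0, hmax, fun t ht => ?_⟩
  obtain ⟨L, hL, hLle⟩ := hP _ (hmem t ht)
  obtain ⟨L0, hL0, hL0le⟩ := hP _ (hmem t0 ht0)
  have hlogle : -Real.log (bdist (Ω ∩ U) (σ t0)) ≤ -Real.log (bdist (Ω ∩ U) (σ t)) :=
    neg_le_neg (Real.log_le_log (bdist_pos hD hb (hmem t ht)) (hmax ht))
  have hL0le' : L0 ≤ α * (-Real.log (bdist (Ω ∩ U) (σ t))) + C0 := by nlinarith
  obtain ⟨r', hr', hp⟩ := (hL.trans hD hL0.symm).mono hD S.hΩ inter_subset_left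
  have hkey : |∫ s in t0..t, kobMetric Ω (σ s) (g s)| ≤ r' + 1 := by
    rcases le_total t0 t with h | h
    · change |klen Ω t0 t σ g| ≤ r' + 1
      rw [abs_of_nonneg (klen_nonneg Ω h σ g)]
      exact P.path.near_opt S.hΩ P.opt (P.h1.trans ht0.1) h (ht.2.trans P.h2) hp.symm
    · rw [intervalIntegral.integral_symm, abs_neg]
      change |klen Ω t t0 σ g| ≤ r' + 1
      rw [abs_of_nonneg (klen_nonneg Ω h σ g)]
      exact P.path.near_opt S.hΩ P.opt (P.h1.trans ht.1) h (ht0.2.trans P.h2) hp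
  linarith

lemma Setup.piece_len (S : Setup Ω U ξ C ν M ε) {o : E} {α C0 : ℝ} (hP : Center (Ω ∩ U) o α C0) :
    ∃ C1 : ℝ, 0 ≤ C1 ∧ ∀ (a b t1 t2 : ℝ) (σ g : ℝ → E), Piece Ω ξ ε a b t1 t2 σ g →
      PathLen (Ω ∩ U) (σ t1) (σ t2) (klen (Ω ∩ U) t1 t2 σ g) ∧
      klen (Ω ∩ U) t1 t2 σ g ≤ klen Ω t1 t2 σ g + C1 := by
  obtain ⟨A, hA, hsharp⟩ := S.sharp
  have hα := hP.1
  have hr0 := S.r0_pos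
  set β := ε / M / 4 with hβdef
  have hβ : 0 < β := by positivity
  set k := β / (2 * α) with hk
  have hk0 : 0 < k := by positivity
  set c := 2 * C0 + 1 with hc
  refine ⟨2 * (1 / k * (A * Real.exp (k * c))), by positivity, fun a b t1 t2 σ g P => ?_⟩
  obtain ⟨t0, ht0, hmax, hgr⟩ := S.growth hP P
  have hD := S.hlog.1
  have hb := S.hlog.2.2.1
  have hsub := P.path.sub P.h1 P.h12 P.h2
  have hmem : ∀ t ∈ Icc t1 t2, σ t ∈ Ω ∩ U := fun t ht =>
    S.mem (hsub.2.2 ht) (by linarith [P.near t ht, S.hε])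
  have hpD : IsPath (Ω ∩ U) t1 t2 σ g := hsub.mono hmem
  refine ⟨⟨t1, t2, σ, g, hpD, rfl, rfl, rfl⟩, ?_⟩
  set F : ℝ → ℝ := fun t => A * bdist (Ω ∩ U) (σ t) ^ β * kobMetric Ω (σ t) (g t) with hF
  have hcont : ContinuousOn (fun t => bdist (Ω ∩ U) (σ t)) (Icc t1 t2) :=
    (continuous_infDist_pt _).comp_continuousOn hsub.continuousOn
  have hFi : IntervalIntegrable F volume t1 t2 := by
    refine (hsub.integrable S.hΩ).continuousOn_mul ?_
    rw [uIcc_of_le P.h12]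
    exact continuousOn_const.mul (hcont.rpow_const fun t ht => Or.inr hβ.le)
  have h1 : klen (Ω ∩ U) t1 t2 σ g ≤ klen Ω t1 t2 σ g + ∫ t in t1..t2, F t := by
    unfold klen
    rw [← intervalIntegral.integral_add (hsub.integrable S.hΩ) hFi]
    refine intervalIntegral.integral_mono_on P.h12 (hpD.integrable hD)
      ((hsub.integrable S.hΩ).add hFi) fun t ht => ?_
    have := hsharp _ (hsub.2.2 ht) (P.near t ht) (g t)
    simp only [hF]
    linarith
  refine h1.trans (add_le_add le_rfl ?_)
  have hΦ : ∀ x : ℝ, 0 ≤ x → HasDerivAt (fun x => -(1 / k) * (A * Real.exp (k * (c - x))))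
      (A * Real.exp (k * (c - x))) x := by
    intro x _
    have h2 : HasDerivAt (fun x : ℝ => k * (c - x)) (k * (-1)) x :=
      ((hasDerivAt_id x).const_sub c).const_mul k
    have h3 := (h2.exp.const_mul A).const_mul (-(1 / k))
    have e : A * Real.exp (k * (c - x)) = -(1 / k) * (A * (Real.exp (k * (c - x)) * (k * -1))) := by
      field_simp
    rw [e]; exact h3
  refine two_sided (κ := fun t => kobMetric Ω (σ t) (g t))
    (φ := fun x => A * Real.exp (k * (c - x))) (B := A * Real.exp (k * c)) ht0.1 ht0.2
    (hsub.integrable S.hΩ) (fun t _ => kobMetric_nonneg _ _ _) hΦ ?_ ?_ hFi ?_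
  · intro x hx
    rw [abs_of_nonneg (by positivity)]
    gcongr
    linarith
  · intro x hx
    simp only [sub_zero]
    have : 0 ≤ 1 / k * (A * Real.exp (k * (c - x))) := by positivity
    linarith
  · intro t ht
    simp only [hF]
    refine mul_le_mul_of_nonneg_right ?_ (kobMetric_nonneg _ _ _)
    refine mul_le_mul_of_nonneg_left ?_ hA.le
    have hδ := bdist_pos hD hb (hmem t ht)
    rw [Real.rpow_def_of_pos hδ]
    refine Real.exp_le_exp.2 ?_
    have h4 := hgr t ht
    have h5 : k * (2 * α * (-Real.log (bdist (Ω ∩ U) (σ t)))) =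
        -(Real.log (bdist (Ω ∩ U) (σ t)) * β) := by
      rw [hk]; field_simp
    nlinarith

lemma Setup.piece_deep (S : Setup Ω U ξ C ν M ε) {o : E} {α C0 : ℝ} (hP : Center (Ω ∩ U) o α C0) :
    ∃ δ0 : ℝ, 0 < δ0 ∧ ∀ (a b t1 t2 : ℝ) (σ g : ℝ → E), Piece Ω ξ ε a b t1 t2 σ g →
      ε ≤ dist (σ t2) (σ t1) → ∃ t0 ∈ Icc t1 t2, δ0 ≤ bdist (Ω ∩ U) (σ t0) := by
  have hα := hP.1
  have hr0 := S.r0_pos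
  obtain ⟨hD, -, hb, hc, hC, hν, hlog⟩ := S.hlog
  set B0 := 2 * C / (ε / M) with hB0
  have hB0p : 0 < B0 := by positivity
  set c := 2 * C0 + 1 with hcdef
  obtain ⟨Λ0, hΛ0⟩ : ∃ Λ0 : ℝ, ∀ Λ ≥ Λ0, 0 < Λ ∧ c / α ≤ Λ ∧
      2 * (B0 * (4 * α / ν) * (Λ / 4) ^ (-ν)) < ε := by
    have ht : Tendsto (fun Λ : ℝ => 2 * (B0 * (4 * α / ν) * (Λ / 4) ^ (-ν))) atTop (𝓝 0) := by
      have h1 : Tendsto (fun Λ : ℝ => (Λ / 4) ^ (-ν)) atTop (𝓝 0) :=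
        (tendsto_rpow_neg_atTop hν).comp (tendsto_id.atTop_div_const (by norm_num))
      simpa using (h1.const_mul (B0 * (4 * α / ν))).const_mul 2
    have := (eventually_gt_atTop (0:ℝ)).and ((eventually_ge_atTop (c / α)).and
      (ht.eventually (gt_mem_nhds S.hε)))
    exact eventually_atTop.1 this
  refine ⟨Real.exp (-Λ0), Real.exp_pos _, fun a b t1 t2 σ g P hε => ?_⟩
  obtain ⟨t0, ht0, hmax, hgr⟩ := S.growth hP P
  refine ⟨t0, ht0, ?_⟩
  by_contra! hlt
  have hsub := P.path.sub P.h1 P.h12 P.h2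
  have hmem : ∀ t ∈ Icc t1 t2, σ t ∈ Ω ∩ U := fun t ht =>
    S.mem (hsub.2.2 ht) (by linarith [P.near t ht, S.hε])
  set Λ := -Real.log (bdist (Ω ∩ U) (σ t0)) with hΛ
  have hΛge : Λ ≥ Λ0 := by
    have := Real.log_le_log (bdist_pos hD hb (hmem t0 ht0)) hlt.le
    rw [Real.log_exp] at this
    linarith
  obtain ⟨hΛp, hΛc, hΛε⟩ := hΛ0 Λ hΛge
  have hX : ∀ x : ℝ, 0 ≤ x → 0 < Λ / 4 + x / (4 * α) := fun x hx => by positivity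
  have hΦ : ∀ x : ℝ, 0 ≤ x →
      HasDerivAt (fun x => -(B0 * (4 * α / ν)) * (Λ / 4 + x / (4 * α)) ^ (-ν))
      (B0 * (Λ / 4 + x / (4 * α)) ^ (-(1 + ν))) x := by
    intro x hx
    have h2 : HasDerivAt (fun x : ℝ => Λ / 4 + x / (4 * α)) (1 / (4 * α)) x :=
      ((hasDerivAt_id x).div_const (4 * α)).const_add (Λ / 4)
    have h3 := (h2.rpow_const (p := -ν) (Or.inl (hX x hx).ne')).const_mul (-(B0 * (4 * α / ν)))
    have e2 : -ν - 1 = -(1 + ν) := by ring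
    have e : B0 * (Λ / 4 + x / (4 * α)) ^ (-(1 + ν)) = -(B0 * (4 * α / ν)) *
        (1 / (4 * α) * -ν * (Λ / 4 + x / (4 * α)) ^ (-ν - 1)) := by
      rw [e2]
      generalize (Λ / 4 + x / (4 * α)) ^ (-(1 + ν)) = Y
      field_simp
    rw [e]; exact h3
  have hgi : IntervalIntegrable (fun t => ‖g t‖) volume t1 t2 := hsub.2.1.1.norm
  have hfin : ∫ t in t1..t2, ‖g t‖ ≤ 2 * (B0 * (4 * α / ν) * (Λ / 4) ^ (-ν)) := by
    refine two_sided (κ := fun t => kobMetric Ω (σ t) (g t))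
      (φ := fun x => B0 * (Λ / 4 + x / (4 * α)) ^ (-(1 + ν)))
      (B := B0 * (Λ / 4) ^ (-(1 + ν))) ht0.1 ht0.2
      (hsub.integrable S.hΩ) (fun t _ => kobMetric_nonneg _ _ _) hΦ ?_ ?_ hgi ?_
    · intro x hx
      have h0 := hX x hx
      rw [abs_of_nonneg (by positivity)]
      refine mul_le_mul_of_nonneg_left ?_ hB0p.le
      refine Real.rpow_le_rpow_of_nonpos (by positivity) ?_ (by linarith)
      have : 0 ≤ x / (4 * α) := by positivity
      linarith
    · intro x hx
      have h0 := hX x hx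
      simp only [zero_div, add_zero]
      have : 0 ≤ B0 * (4 * α / ν) * (Λ / 4 + x / (4 * α)) ^ (-ν) := by positivity
      linarith
    · intro t ht
      have hu0 : 0 ≤ |∫ s in t0..t, kobMetric Ω (σ s) (g s)| := abs_nonneg _
      have h4 := hgr t ht
      set u := |∫ s in t0..t, kobMetric Ω (σ s) (g s)| with hu
      have h0 := hX u hu0
      have h5 : Λ ≤ -Real.log (bdist (Ω ∩ U) (σ t)) :=
        neg_le_neg (Real.log_le_log (bdist_pos hD hb (hmem t ht)) (hmax t ht))
      have h6 : Λ / 4 + u / (4 * α) ≤ -Real.log (bdist (Ω ∩ U) (σ t)) := by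
        rw [div_le_iff₀ hα] at hΛc
        have h7 : u / (4 * α) * (4 * α) = u := by field_simp
        have h8 : (Λ / 4 + u / (4 * α)) * (4 * α) ≤
            -Real.log (bdist (Ω ∩ U) (σ t)) * (4 * α) := by
          rw [add_mul, h7]
          nlinarith
        exact le_of_mul_le_mul_right h8 (by positivity)
      have h9 : Λ / 4 + u / (4 * α) ≤ |Real.log (bdist (Ω ∩ U) (σ t))| := h6.trans (neg_le_abs _)
      have h10 := S.lower (hsub.2.2 ht) (P.near t ht) (g t)
      have h11 : ‖g t‖ * (Λ / 4 + u / (4 * α)) ^ (1 + ν) ≤ B0 * kobMetric Ω (σ t) (g t) := by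
        refine le_trans ?_ h10
        gcongr
      rw [Real.rpow_neg h0.le, mul_right_comm, ← div_eq_mul_inv, le_div_iff₀ (by positivity)]
      exact h11
  have h12 : dist (σ t2) (σ t1) ≤ ∫ t in t1..t2, ‖g t‖ := by
    rw [dist_eq_norm, hsub.sub_eq]
    exact intervalIntegral.norm_integral_le_integral_norm P.h12
  linarith

/-- First and last time on the sphere of radius `2ε`. -/
lemma exit_times {a b : ℝ} {d : ℝ → ℝ} (hd : ContinuousOn d (Icc a b)) {c : ℝ}
    (ha : d a < c) (hb : d b < c) {t : ℝ} (ht : t ∈ Icc a b) (hct : c < d t) :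
    ∃ t1 t2, a ≤ t1 ∧ t1 ≤ t2 ∧ t2 ≤ b ∧ d t1 = c ∧ d t2 = c ∧ (∀ s ∈ Icc a t1, d s ≤ c) ∧
      ∀ s ∈ Icc t2 b, d s ≤ c := by
  have hcl : IsClosed {s ∈ Icc a b | c ≤ d s} :=
    isClosed_Icc.isClosed_le continuousOn_const hd
  have hK : IsCompact {s ∈ Icc a b | c ≤ d s} :=
    isCompact_Icc.of_isClosed_subset hcl (sep_subset _ _)
  have hne : {s ∈ Icc a b | c ≤ d s}.Nonempty := ⟨t, ht, hct.le⟩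
  obtain ⟨t1, h1, h1l⟩ := hK.exists_isLeast hne
  obtain ⟨t2, h2, h2g⟩ := hK.exists_isGreatest hne
  have e1 : d t1 = c := by
    obtain ⟨s, hs, hsc⟩ := intermediate_value_Icc h1.1.1 (hd.mono (Icc_subset_Icc_right h1.1.2))
      ⟨ha.le, h1.2⟩
    have := h1l ⟨⟨hs.1, hs.2.trans h1.1.2⟩, hsc.ge⟩
    rw [le_antisymm this hs.2]; exact hsc
  have e2 : d t2 = c := by
    obtain ⟨s, hs, hsc⟩ := intermediate_value_Icc' h2.1.2 (hd.mono (Icc_subset_Icc_left h2.1.1))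
      ⟨hb.le, h2.2⟩
    have := h2g ⟨⟨h2.1.1.trans hs.1, hs.2⟩, hsc.ge⟩
    rw [le_antisymm hs.1 this]; exact hsc
  refine ⟨t1, t2, h1.1.1, h1l h2, h2.1.2, e1, e2, fun s hs => ?_, fun s hs => ?_⟩
  · by_contra! h
    have := h1l ⟨⟨hs.1, hs.2.trans h1.1.2⟩, h.le⟩
    rw [le_antisymm hs.2 this, e1] at h
    exact lt_irrefl _ h
  · by_contra! h
    have := h2g ⟨⟨h2.1.1.trans hs.1, hs.2⟩, h.le⟩
    rw [le_antisymm this hs.1, e2] at h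
    exact lt_irrefl _ h

lemma Setup.main (S : Setup Ω U ξ C ν M ε) : ∃ K' : ℝ, 0 < K' ∧
    ∀ p ∈ Ω ∩ ball ξ ε, ∀ q ∈ Ω ∩ ball ξ ε,
        kobDist Ω p q ≤ kobDist (Ω ∩ U) p q ∧
        kobDist (Ω ∩ U) p q ≤ kobDist Ω p q + K' := by
  obtain ⟨hD, ⟨o, ho⟩, hb, hc, hC, hν, hlog⟩ := S.hlog
  have hε := S.hε
  obtain ⟨α, C0, hα, hC0, hP⟩ := path_to_center hD hc S.hM0
    (fun x hx y hy => S.hM x hx.1 y hy.1) ho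
  have hPC : Center (Ω ∩ U) o α C0 := ⟨hα, hC0, hP⟩
  obtain ⟨C1, hC1, hlen⟩ := S.piece_len hPC
  obtain ⟨δ0, hδ0, hdeep⟩ := S.piece_deep hPC
  refine ⟨1 + 2 * C1 + 2 * (α * |Real.log δ0| + C0), by positivity, ?_⟩
  rintro p ⟨hpΩ, hp⟩ q ⟨hqΩ, hq⟩
  rw [mem_ball] at hp hq
  have hpD := S.mem hpΩ (by linarith)
  have hqD := S.mem hqΩ (by linarith)
  obtain ⟨L1, hL1, -⟩ := hP p hpD
  obtain ⟨L2, hL2, -⟩ := hP q hqD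
  have hpq := hL1.trans hD hL2.symm
  constructor
  · rw [kobDist_eq (Ω ∩ U)]
    refine le_csInf ⟨_, hpq⟩ fun r hr => ?_
    obtain ⟨r', hr', h⟩ := PathLen.mono hD S.hΩ inter_subset_left hr
    exact h.kobDist_le.trans hr'
  obtain ⟨r', -, hpq'⟩ := hpq.mono hD S.hΩ inter_subset_left
  obtain ⟨r, hr, hlt⟩ : ∃ r ∈ {r | PathLen Ω p q r}, r < kobDist Ω p q + 1 := by
    refine exists_lt_of_csInf_lt ⟨_, hpq'⟩ ?_
    rw [← kobDist_eq]; linarith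
  obtain ⟨a, b, σ, g, hpath, rfl, rfl, rfl⟩ := hr
  have hdc : ContinuousOn (fun t => dist (σ t) ξ) (Icc a b) :=
    continuous_dist.comp_continuousOn (hpath.continuousOn.prodMk continuousOn_const)
  have hn0 : 0 ≤ α * |Real.log δ0| := by positivity
  by_cases hall : ∀ t ∈ Icc a b, dist (σ t) ξ ≤ 2 * ε
  · obtain ⟨h1, h2⟩ := hlen a b a b σ g ⟨hpath, hlt.le, le_rfl, hpath.1, le_rfl, hall⟩
    linarith [h1.kobDist_le]
  push Not at hall
  obtain ⟨t, ht, hct⟩ := hall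
  obtain ⟨t1, t2, h1, h12, h2, e1, e2, hn1, hn2⟩ := exit_times hdc (c := 2 * ε)
    (by linarith) (by linarith) ht hct
  obtain ⟨u, hu, hδu⟩ := hdeep a b a t1 σ g ⟨hpath, hlt.le, le_rfl, h1, h12.trans h2, hn1⟩ (by
    linarith [dist_triangle (σ t1) (σ a) ξ])
  obtain ⟨w, hw, hδw⟩ := hdeep a b t2 b σ g ⟨hpath, hlt.le, h1.trans h12, h2, le_rfl, hn2⟩ (by
    have := dist_triangle (σ t2) (σ b) ξ
    rw [dist_comm (σ t2) (σ b)] at this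
    linarith)
  obtain ⟨p1, l1⟩ := hlen a b a u σ g ⟨hpath, hlt.le, le_rfl, hu.1, by linarith [hu.2],
    fun s hs => hn1 s ⟨hs.1, hs.2.trans hu.2⟩⟩
  obtain ⟨p2, l2⟩ := hlen a b w b σ g ⟨hpath, hlt.le, by linarith [hw.1], hw.2, le_rfl,
    fun s hs => hn2 s ⟨hw.1.trans hs.1, hs.2⟩⟩
  have huD : σ u ∈ Ω ∩ U := S.mem (hpath.2.2 ⟨hu.1, by linarith [hu.2]⟩) (by linarith [hn1 u hu])
  have hwD : σ w ∈ Ω ∩ U := S.mem (hpath.2.2 ⟨by linarith [hw.1], hw.2⟩) (by linarith [hn2 w hw])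
  obtain ⟨Lu, hLu, hLu'⟩ := hP _ huD
  obtain ⟨Lw, hLw, hLw'⟩ := hP _ hwD
  have hbd : ∀ x, δ0 ≤ bdist (Ω ∩ U) x →
      α * (-Real.log (bdist (Ω ∩ U) x)) ≤ α * |Real.log δ0| := by
    intro x hx
    gcongr
    exact (neg_le_neg (Real.log_le_log hδ0 hx)).trans (neg_le_abs _)
  have htot := (((p1.trans hD hLu).trans hD hLw.symm).trans hD p2).kobDist_le
  have huw : u ≤ w := hu.2.trans (h12.trans hw.1)
  have k1 := hpath.klen_add S.hΩ (hu.1.trans huw) hw.2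
  have k2 := (hpath.sub le_rfl (hu.1.trans huw) hw.2).klen_add S.hΩ hu.1 huw
  have k3 := klen_nonneg Ω huw σ g
  linarith [hbd _ hδu, hbd _ hδw]

end Main

theorem statement_7 {n : ℕ} (hn : 2 ≤ n)
    (Ω U : Set (EuclideanSpace ℂ (Fin n)))
    (hΩo : IsOpen Ω) (hΩc : IsConnected Ω) (hΩb : Bornology.IsBounded Ω)
    (hUo : IsOpen U)
    (hlog : LogTypeConvex (Ω ∩ U))
    (ξ : EuclideanSpace ℂ (Fin n)) (hξ : ξ ∈ frontier Ω ∩ U) :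
    ∃ ε : ℝ, 0 < ε ∧ ball ξ ε ⊆ U ∧ ∃ K' : ℝ, 0 < K' ∧
      ∀ p ∈ Ω ∩ ball ξ ε, ∀ q ∈ Ω ∩ ball ξ ε,
        kobDist Ω p q ≤ kobDist (Ω ∩ U) p q ∧
        kobDist (Ω ∩ U) p q ≤ kobDist Ω p q + K' := by
  have : Nonempty (Fin n) := ⟨⟨0, by omega⟩⟩
  obtain ⟨C, ν, hl⟩ := hlog
  obtain ⟨R, hR, hRU⟩ := Metric.isOpen_iff.1 hUo ξ hξ.2
  obtain ⟨M, hM⟩ := isBounded_iff.1 hΩb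
  have S : Setup Ω U ξ C ν (max M (R / 4)) (R / 4) :=
    { hΩ := hΩo
      hM := fun x hx y hy => (hM hx hy).trans (le_max_left _ _)
      hM0 := lt_max_of_lt_right (by positivity)
      hε := by positivity
      hεM := le_max_right _ _
      hU := by
        have : 4 * (R / 4) = R := by ring
        rw [this]; exact hRU
      hlog := hl }
  obtain ⟨K', hK', h⟩ := S.main
  exact ⟨R / 4, by positivity, (ball_subset_ball (by linarith)).trans hRU, K', hK', h⟩
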